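/- Let N ≥ 2 and J ≥ 1 be integers. For each 1 ≤ i ≤ J let k_i ≥ 1 be an integer and let P_{i1}, …, P_{ik_i} ∈ ℚ[X_1, …, X_N] be polynomials of respective degrees m_{i1}, …, m_{ik_i} ≥ 1; let Z(P_{i1}, …, P_{ik_i}) = {x ∈ ℚ^N : P_{i1}(x) = ⋯ = P_{ik_i}(x) = 0}, let 𝒵 = ∪_{i=1}^J Z(P_{i1}, …, P_{ik_i}), let M_i = max_{1 ≤ j ≤ k_i} m_{ij}, and M = Σ_{i=1}^J M_i. Let V ⊆ ℚ^N be an L-dimensional subspace (1 ≤ L ≤ N), let F be a quadratic form in N variables over ℚ, let ω be the Witt index of (V, F), λ = dim V^⊥, and m = ω + λ. Let Z(V,F) = {z ∈ V \ {0} : F(z) = 0} and suppose Z(V,F) is not contained in 𝒵. Then there exists a constant C depending only on L and M and m linearly independent vectors x_1, …, x_m ∈ Z(V,F) \ 𝒵 with h(x_1) ≤ h(x_2) ≤ ⋯ ≤ h(x_m) and h(x_n) ≤ C · H(F)^{(9L+11)/2} · H(V)^{9L+12} for each 1 ≤ n ≤ m. -/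

import Mathlib

/-- Projective (homogeneous) height of a rational vector: the sup-norm of a primitive integer
vector proportional to it. -/
noncomputable def projHeight {ι : Type*} [Fintype ι] (x : ι → ℚ) : ℕ :=
  sInf {m : ℕ | ∃ y : ι → ℤ,
    (∃ c : ℚ, c ≠ 0 ∧ ∀ i, (y i : ℚ) = c * x i) ∧
    Finset.univ.gcd y = 1 ∧ m = Finset.univ.sup fun i => (y i).natAbs}

/-- Height of an `L`-dimensional subspace `V ⊆ ℚ^N`: the Euclidean norm of the vector of all
`L×L` minors of an `L×N` matrix whose rows form a ℤ-basis of `V ∩ ℤ^N` (computed via the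
Cauchy–Binet formula as `√det(B Bᵀ)`). -/
noncomputable def subHeight (N L : ℕ) (V : Submodule ℚ (Fin N → ℚ)) : ℝ :=
  sInf {r : ℝ | ∃ B : Matrix (Fin L) (Fin N) ℤ,
    (∀ z : Fin N → ℤ, ((fun i => (z i : ℚ)) ∈ V) ↔
      ∃ c : Fin L → ℤ, ∀ j, z j = ∑ i, c i * B i j) ∧
    r = Real.sqrt ((B * B.transpose).det : ℝ)}

/-- The radical `V^⊥ = {x ∈ V : F(x,y) = 0 ∀ y ∈ V}` of the quadratic space `(V, F)`. -/
noncomputable def quadRadical (N : ℕ) (f : Fin N → Fin N → ℚ)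
    (V : Submodule ℚ (Fin N → ℚ)) : Submodule ℚ (Fin N → ℚ) :=
  V ⊓ (Matrix.toBilin' (Matrix.of f)).orthogonal V

/-- `W` is a totally isotropic subspace of the quadratic space `(V, F)`. -/
def IsTotallyIsotropic (N : ℕ) (f : Fin N → Fin N → ℚ)
    (V W : Submodule ℚ (Fin N → ℚ)) : Prop :=
  W ≤ V ∧ ∀ x ∈ W, ∀ y ∈ W, ∑ i, ∑ j, f i j * x i * y j = 0

/-- Inhomogeneous height `h(x) = H(1, x)` of a rational vector. -/
noncomputable def inhomHeight {N : ℕ} (x : Fin N → ℚ) : ℕ :=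
  projHeight (Fin.cons 1 x)

/-!
Writing `V` as the image of an injective integer matrix `E` with small entries turns the problem
into one about all of `ℚ^L`: an integral symmetric form `A = Eᵀ F E`, and a single polynomial `P`
(a product of one `P_{ij}` per `i`) that is nonzero at some isotropic vector and must be nonzero at
the vectors to be found.

If every isotropic vector is radical, the isotropic vectors form the kernel of `A`, which is the
image of a linear map with small integer coefficients. Otherwise Cassels' theorem gives a small
isotropic `y` outside the radical, and up to scaling the reflections
`x ↦ B(x, x) y - 2 B(x, y) x` parametrize all isotropic vectors not orthogonal to `y`. In both
cases the relevant isotropic vectors are the values of a polynomial map of bounded degree. The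
values at small integer points where `P` does not vanish span all values, since a linear form
vanishing on them would make its product with `P` vanish on a large grid. A totally isotropic
subspace can be moved, without lowering its dimension, to one not contained in the orthogonal
complement of `y`, and such a space is spanned by its vectors outside that complement.

The entries of `E` are controlled by Cramer's rule: if `S` is a nonsingular maximal minor of a basis
`B` of `V ∩ ℤ^N`, then `B = S X` where `X` contains an identity block, and `X Xᵀ - 1` is positive
semidefinite, so that each diagonal entry of `X Xᵀ` is at most its determinant.
-/

open Matrix

section PolynomialMaps

open MvPolynomial

variable {σ τ : Type*}

lemma totalDegree_bind₁_le {R : Type*} [CommSemiring R] {Φ : σ → MvPolynomial τ R} {k : ℕ}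
    (hΦ : ∀ i, (Φ i).totalDegree ≤ k) (p : MvPolynomial σ R) :
    (bind₁ Φ p).totalDegree ≤ k * p.totalDegree := by
  rw [bind₁, aeval_def, eval₂_eq]
  refine totalDegree_finsetSum_le fun d hd => (totalDegree_mul _ _).trans ?_
  rw [algebraMap_eq, totalDegree_C, zero_add]
  calc (∏ i ∈ d.support, Φ i ^ d i).totalDegree
      ≤ ∑ i ∈ d.support, (Φ i ^ d i).totalDegree := totalDegree_finsetProd _ _
    _ ≤ ∑ i ∈ d.support, k * d i := by
        gcongr with i
        exact (totalDegree_pow _ _).trans (by rw [mul_comm]; gcongr; exact hΦ i)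
    _ = k * d.sum fun _ e => e := (Finset.mul_sum _ _ _).symm
    _ ≤ k * p.totalDegree := by gcongr; exact le_totalDegree hd

lemma eval_bind₁ {R : Type*} [CommSemiring R] (Φ : σ → MvPolynomial τ R) (a : τ → R)
    (p : MvPolynomial σ R) : eval a (bind₁ Φ p) = eval (fun i => eval a (Φ i)) p :=
  eval₂Hom_bind₁ _ _ _ _

lemma exists_nat_eval_ne_zero {R : Type*} [CommRing R] [IsDomain R] [CharZero R] [Finite σ]
    {p : MvPolynomial σ R} {d : ℕ} (hd : p.totalDegree ≤ d) (hp : p ≠ 0) :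
    ∃ a : σ → ℕ, (∀ i, a i ≤ d) ∧ eval (fun i => (a i : R)) p ≠ 0 := by
  classical
  by_contra! hvanish
  refine hp (eq_zero_of_eval_zero_at_prod_finset p
    (fun _ => (Finset.range (d + 1)).image ((↑) : ℕ → R)) (fun i => ?_) fun x hx => ?_)
  · rw [Finset.card_image_of_injective _ Nat.cast_injective, Finset.card_range]
    exact Nat.lt_succ_of_le ((degreeOf_le_totalDegree p i).trans hd)
  · simp only [Finset.mem_image, Finset.mem_range, Nat.lt_succ_iff] at hx
    choose a ha hax using hx
    rw [← funext hax]
    exact hvanish a ha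

lemma exists_ne_zero_eval_add_smul_ne_zero {R : Type*} [CommRing R] [IsDomain R] [CharZero R]
    {p : MvPolynomial σ R} {z : σ → R} (hz : eval z p ≠ 0) (y : σ → R) :
    ∃ s : R, s ≠ 0 ∧ eval (z + s • y) p ≠ 0 := by
  set line : σ → MvPolynomial Unit R := fun i => C (z i) + X () * C (y i)
  have eval_line (s : R) : eval (fun _ => s) (bind₁ line p) = eval (z + s • y) p := by
    rw [eval_bind₁]
    congr
    simp [line, funext_iff]
  have hp : bind₁ line p ≠ 0 := fun h => hz <| by simpa [h] using (eval_line 0).symm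
  obtain ⟨a, -, ha⟩ := exists_nat_eval_ne_zero le_rfl (mul_ne_zero (X_ne_zero ()) hp)
  rw [map_mul, eval_X] at ha
  exact ⟨a (), left_ne_zero_of_mul ha, eval_line _ ▸ right_ne_zero_of_mul ha⟩

lemma exists_totalDegree_le_one_eval_eq {R ι : Type*} [CommSemiring R] [Finite ι]
    (ℓ : (ι → R) →ₗ[R] R) :
    ∃ p : MvPolynomial ι R, p.totalDegree ≤ 1 ∧ ∀ x, eval x p = ℓ x := by
  classical
  have := Fintype.ofFinite ι
  obtain ⟨u, rfl⟩ := (dotProductEquiv R ι).surjective ℓ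
  refine ⟨(replicateRow Unit u).toMvPolynomial (), toMvPolynomial_totalDegree_le _ _,
    fun x => toMvPolynomial_eval_eq_apply _ _ _⟩

lemma eval_mem_span_eval_ne_zero {K ι : Type*} [Field K] [CharZero K] [Finite ι] [Finite σ]
    {Φ : ι → MvPolynomial σ K} {k : ℕ} (hΦ : ∀ i, (Φ i).totalDegree ≤ k)
    {P : MvPolynomial ι K} {a₀ : σ → K} (ha₀ : eval (fun i => eval a₀ (Φ i)) P ≠ 0) (b : σ → K) :
    (fun i => eval b (Φ i)) ∈ Submodule.span K {x | eval x P ≠ 0 ∧ ∃ a : σ → ℕ,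
      (∀ i, a i ≤ k * (P.totalDegree + 1)) ∧ x = fun i => eval (fun j => (a j : K)) (Φ i)} := by
  by_contra hb
  obtain ⟨ℓ, hℓb, hℓ⟩ := Submodule.exists_le_ker_of_notMem hb
  obtain ⟨q, hq, eval_q⟩ := exists_totalDegree_le_one_eval_eq ℓ
  have hdeg : (bind₁ Φ (P * q)).totalDegree ≤ k * (P.totalDegree + 1) :=
    (totalDegree_bind₁_le hΦ _).trans (by grw [totalDegree_mul, hq])
  have hP : bind₁ Φ P ≠ 0 := fun h => ha₀ (by rw [← eval_bind₁, h, map_zero])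
  have hq : bind₁ Φ q ≠ 0 := fun h => hℓb (by rw [← eval_q, ← eval_bind₁, h, map_zero])
  obtain ⟨a, ha, hne⟩ := exists_nat_eval_ne_zero hdeg (map_mul (bind₁ Φ) P q ▸ mul_ne_zero hP hq)
  rw [eval_bind₁, map_mul, eval_q] at hne
  exact right_ne_zero_of_mul hne
    (hℓ (Submodule.subset_span ⟨left_ne_zero_of_mul hne, a, ha, rfl⟩))

end PolynomialMaps

section ScaledReflection

variable {R V : Type*} [CommRing R] [AddCommGroup V] [Module R V] (B : LinearMap.BilinForm R V)

/-- The reflection of `y` in the hyperplane orthogonal to `t`, scaled by `B t t` so that it is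
polynomial in `t` and makes sense over any commutative ring. -/
def scaledReflection (y t : V) : V := B t t • y - (2 * B t y) • t

variable {B}

lemma scaledReflection_isotropic (hB : B.IsSymm) {y : V} (hy : B y y = 0) (t : V) :
    B (scaledReflection B y t) (scaledReflection B y t) = 0 := by
  simp only [scaledReflection, map_sub, map_smul, LinearMap.sub_apply, LinearMap.smul_apply,
    smul_eq_mul, hB.eq y t, hy]
  ring

lemma scaledReflection_of_isotropic {t : V} (ht : B t t = 0) (y : V) :
    scaledReflection B y t = -(2 * B t y) • t := by
  rw [scaledReflection, ht, zero_smul, zero_sub, neg_smul]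

lemma scaledReflection_smul (y t : V) (c : R) :
    scaledReflection B y (c • t) = c ^ 2 • scaledReflection B y t := by
  simp only [scaledReflection, map_smul, LinearMap.smul_apply, smul_eq_mul]
  module

lemma scaledReflection_smul_sub (hB : B.IsSymm) {y : V} (hy : B y y = 0) (q : R) (t : V) :
    scaledReflection B y (q • y - t) = scaledReflection B y t := by
  simp only [scaledReflection, map_sub, map_smul, LinearMap.sub_apply, LinearMap.smul_apply,
    smul_eq_mul, hB.eq y t, hy]
  module

lemma scaledReflection_ne_zero [IsDomain R] [Module.IsTorsionFree R V] {y t : V} (hy : y ≠ 0)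
    (ht : B t t ≠ 0) : scaledReflection B y t ≠ 0 := by
  intro h
  have hty : B t y = 0 := by
    have : B t t * B t y = 0 := by
      have := congrArg (B t) h
      simp only [scaledReflection, map_sub, map_smul, smul_eq_mul, map_zero] at this
      linear_combination -this
    exact (mul_eq_zero.mp this).resolve_left ht
  rw [scaledReflection, hty, mul_zero, zero_smul, sub_zero] at h
  exact (smul_ne_zero ht hy) h

variable {S ι : Type*} [CommRing S] [Fintype ι] [DecidableEq ι]

lemma map_toBilin' (φ : R →+* S) (A : Matrix ι ι R) (x y : ι → R) :
    φ (toBilin' A x y) = toBilin' (A.map φ) (φ ∘ x) (φ ∘ y) := by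
  simp [toBilin'_apply, map_sum]

lemma map_comp_scaledReflection (φ : R →+* S) (A : Matrix ι ι R) (y t : ι → R) :
    φ ∘ scaledReflection (toBilin' A) y t =
      scaledReflection (toBilin' (A.map φ)) (φ ∘ y) (φ ∘ t) := by
  funext i
  simp [scaledReflection, map_toBilin', map_ofNat φ, Function.comp_def]

end ScaledReflection

section Bounds

variable {ι : Type*} [Fintype ι] [DecidableEq ι] {A : Matrix ι ι ℤ} {G : ℤ}

lemma abs_toBilin'_le (hA : ∀ i j, |A i j| ≤ G) {x y : ι → ℤ} {X Y : ℤ}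
    (hx : ∀ i, |x i| ≤ X) (hy : ∀ i, |y i| ≤ Y) :
    |toBilin' A x y| ≤ Fintype.card ι ^ 2 * G * X * Y := by
  rw [toBilin'_apply]
  calc |∑ i, ∑ j, x i * A i j * y j| ≤ ∑ i, ∑ j, |x i * A i j * y j| :=
        (Finset.abs_sum_le_sum_abs _ _).trans
          (Finset.sum_le_sum fun i _ => Finset.abs_sum_le_sum_abs _ _)
    _ ≤ ∑ _i : ι, ∑ _j : ι, X * G * Y := by
        simp only [abs_mul]
        gcongr with i _ j
        · exact mul_nonneg ((abs_nonneg _).trans (hx i)) ((abs_nonneg _).trans (hA i j))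
        · exact (abs_nonneg _).trans (hx i)
        · exact hx i
        · exact hA i j
        · exact hy j
    _ = Fintype.card ι ^ 2 * G * X * Y := by
        simp only [Finset.sum_const, Finset.card_univ, nsmul_eq_mul]
        ring

lemma abs_scaledReflection_le (hA : ∀ i j, |A i j| ≤ G) {y t : ι → ℤ} {Y T : ℤ}
    (hy : ∀ i, |y i| ≤ Y) (ht : ∀ i, |t i| ≤ T) (i : ι) :
    |scaledReflection (toBilin' A) y t i| ≤ 3 * Fintype.card ι ^ 2 * G * T ^ 2 * Y := by
  have hty := abs_toBilin'_le hA ht hy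
  calc |scaledReflection (toBilin' A) y t i|
      ≤ |toBilin' A t t| * |y i| + 2 * |toBilin' A t y| * |t i| := by
        simpa [scaledReflection, abs_mul] using
          abs_sub (toBilin' A t t * y i) (2 * toBilin' A t y * t i)
    _ ≤ Fintype.card ι ^ 2 * G * T * T * Y + 2 * (Fintype.card ι ^ 2 * G * T * Y) * T :=
        add_le_add (mul_le_mul (abs_toBilin'_le hA ht ht) (hy i) (abs_nonneg _)
          ((abs_nonneg _).trans (abs_toBilin'_le hA ht ht)))
          (mul_le_mul (by gcongr) (ht i) (abs_nonneg _)
            (mul_nonneg zero_le_two ((abs_nonneg _).trans hty)))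
    _ = 3 * Fintype.card ι ^ 2 * G * T ^ 2 * Y := by ring

end Bounds

section Cassels

variable {ι : Type*} [Fintype ι]

lemma exists_simultaneous_approx (a : ι → ℤ) {T Q : ℕ} (hT : 0 < T) (hQ : 0 < Q) :
    ∃ (q : ℤ) (b : ι → ℤ), 0 < q ∧ q ≤ (Q : ℤ) ^ Fintype.card ι ∧
      ∀ j, (Q : ℤ) * |q * a j - T * b j| < T := by
  have hε : (0 : ℝ) < 1 / Q := by positivity
  have hT₀ : (T : ℤ) ≠ 0 := by positivity
  have hcard : AbsoluteValue.absIsAdmissible.card (1 / Q) = Q := by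
    change ⌈(1 : ℝ) / (1 / Q)⌉₊ = Q
    rw [one_div_one_div, Nat.ceil_natCast]
  obtain ⟨k, l, hne, hkl⟩ := AbsoluteValue.absIsAdmissible.exists_approx hε hT₀
    fun (n : Fin _) j => (n : ℤ) * a j
  wlog hlt : k < l generalizing k l
  · refine this l k hne.symm (fun j => ?_) (hne.lt_or_gt.resolve_left hlt)
    rw [AbsoluteValue.map_sub]
    exact hkl j
  refine ⟨l - k, fun j => l * a j / T - k * a j / T, by simpa using hlt, ?_, fun j => ?_⟩
  · have hl : (l : ℤ) ≤ Q ^ Fintype.card ι := by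
      exact_mod_cast (Nat.lt_succ_iff.mp l.isLt).trans_eq (congrArg (· ^ _) hcard)
    lia
  · have hrem : (l - k) * a j - T * (l * a j / T - k * a j / T) = l * a j % T - k * a j % T := by
      linear_combination -Int.emod_add_mul_ediv (l * a j) T + Int.emod_add_mul_ediv (k * a j) T
    have hlt := hkl j
    rw [AbsoluteValue.abs_apply, AbsoluteValue.abs_apply, zsmul_eq_mul, mul_one_div,
      lt_div_iff₀ (by positivity), abs_of_nonneg (by positivity : (0 : ℤ) ≤ T)] at hlt
    rw [hrem, mul_comm]
    exact_mod_cast hlt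

lemma exists_ne_zero_approx {a : ι → ℤ} {T Q : ℕ} (hT : 0 < T) (hQ : 0 < Q)
    (haT : ∀ i, |a i| ≤ T) {i₀ : ι} (hi₀ : |a i₀| = T) :
    ∃ (q : ℤ) (b : ι → ℤ), b ≠ 0 ∧ (∀ i, |b i| ≤ (Q : ℤ) ^ Fintype.card ι) ∧
      ∀ i, (Q : ℤ) * |(q • a - (T : ℤ) • b) i| < T := by
  obtain ⟨q, b, hq, hqQ, hd⟩ := exists_simultaneous_approx a hT hQ
  have hT₀ : (0 : ℤ) < T := by exact_mod_cast hT
  refine ⟨q, b, ?_, fun i => ?_, hd⟩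
  · rintro rfl
    have hlt := hd i₀
    rw [Pi.zero_apply, mul_zero, sub_zero, abs_mul, hi₀, abs_of_pos hq, ← mul_assoc] at hlt
    have : (0 : ℤ) < Q * q := by positivity
    nlinarith
  · have hdi : |q * a i - T * b i| < T :=
      (le_mul_of_one_le_left (abs_nonneg _) (by exact_mod_cast hQ)).trans_lt (hd i)
    have hqa : |q * a i| ≤ q * T := by
      rw [abs_mul, abs_of_pos hq]
      gcongr
      exact haT i
    have : T * |b i| < T * (q + 1) := calc
      T * |b i| = |q * a i - (q * a i - T * b i)| := by rw [sub_sub_cancel, abs_mul, Nat.abs_cast]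
      _ ≤ |q * a i| + |q * a i - T * b i| := abs_sub _ _
      _ < T * (q + 1) := by linarith
    exact (Int.lt_add_one_iff.mp (lt_of_mul_lt_mul_left this hT₀.le)).trans hqQ

variable [DecidableEq ι] {A : Matrix ι ι ℤ} {G Q : ℕ}

lemma abs_scaledReflection_lt_of_approx (hA : A.IsSymm) (hG : ∀ i j, |A i j| ≤ G) (hQ : 0 < Q)
    (hGQ : 3 * Fintype.card ι ^ 2 * G ≤ Q ^ 2) {a b : ι → ℤ} (ha : toBilin' A a a = 0)
    {T : ℕ} (haT : ∀ i, |a i| ≤ T) {q : ℤ}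
    (hd : ∀ i, (Q : ℤ) * |(q • a - (T : ℤ) • b) i| < T) (i : ι) :
    |scaledReflection (toBilin' A) a b i| < T := by
  set r := scaledReflection (toBilin' A) a b
  set d := q • a - (T : ℤ) • b
  have hB : (toBilin' A).IsSymm := isSymm_toBilin'_iff_isSymm.mpr hA
  have hr : scaledReflection (toBilin' A) a ((Q : ℤ) • d) = ((Q : ℤ) ^ 2 * T ^ 2) • r := by
    rw [scaledReflection_smul, scaledReflection_smul_sub hB ha, scaledReflection_smul, smul_smul]
  have hQd (i : ι) : |((Q : ℤ) • d) i| ≤ T - 1 := by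
    have := hd i
    rw [Pi.smul_apply, smul_eq_mul, abs_mul, Nat.abs_cast]
    lia
  have hT : (0 : ℤ) < T := (by positivity : (0 : ℤ) ≤ Q * |d i|).trans_lt (hd i)
  have hbound : (Q : ℤ) ^ 2 * T ^ 2 * |r i| ≤ Q ^ 2 * T ^ 2 * (T - 1) := calc
    (Q : ℤ) ^ 2 * T ^ 2 * |r i| = |scaledReflection (toBilin' A) a ((Q : ℤ) • d) i| := by
      rw [hr, Pi.smul_apply, smul_eq_mul, abs_mul,
        abs_of_nonneg (by positivity : (0 : ℤ) ≤ Q ^ 2 * T ^ 2)]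
    _ ≤ 3 * Fintype.card ι ^ 2 * G * (T - 1) ^ 2 * T := abs_scaledReflection_le hG haT hQd i
    _ ≤ Q ^ 2 * (T - 1) ^ 2 * T := by gcongr; exact_mod_cast hGQ
    _ ≤ Q ^ 2 * T ^ 2 * (T - 1) := by nlinarith [mul_nonneg (sq_nonneg (Q : ℤ)) hT.le]
  exact Int.le_sub_one_iff.mp (le_of_mul_le_mul_left hbound (by positivity))

lemma exists_smaller_isotropic (hA : A.IsSymm) (hG : ∀ i j, |A i j| ≤ G) (hQ : 0 < Q)
    (hGQ : 3 * Fintype.card ι ^ 2 * G ≤ Q ^ 2) {a : ι → ℤ} (ha₀ : a ≠ 0)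
    (ha : toBilin' A a a = 0) {T : ℕ} (haT : ∀ i, |a i| ≤ T) (hT : Q ^ Fintype.card ι < T) :
    ∃ b ≠ 0, toBilin' A b b = 0 ∧ ∀ i, |b i| < T := by
  by_cases hsmall : ∀ i, |a i| < T
  · exact ⟨a, ha₀, ha, hsmall⟩
  push Not at hsmall
  obtain ⟨i₀, hi₀⟩ := hsmall
  obtain ⟨q, b, hb₀, hbQ, hd⟩ :=
    exists_ne_zero_approx (Nat.zero_lt_of_lt hT) hQ haT ((haT i₀).antisymm hi₀)
  by_cases hb : toBilin' A b b = 0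
  · exact ⟨b, hb₀, hb, fun i => (hbQ i).trans_lt (by exact_mod_cast hT)⟩
  · exact ⟨scaledReflection (toBilin' A) a b, scaledReflection_ne_zero ha₀ hb,
      scaledReflection_isotropic (isSymm_toBilin'_iff_isSymm.mpr hA) ha b,
      abs_scaledReflection_lt_of_approx hA hG hQ hGQ ha haT hd⟩

theorem exists_small_isotropic (hA : A.IsSymm) (hG : ∀ i j, |A i j| ≤ G) (hQ : 0 < Q)
    (hGQ : 3 * Fintype.card ι ^ 2 * G ≤ Q ^ 2) {z : ι → ℤ} (hz₀ : z ≠ 0)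
    (hz : toBilin' A z z = 0) :
    ∃ b ≠ 0, toBilin' A b b = 0 ∧ ∀ i, |b i| ≤ (Q : ℤ) ^ Fintype.card ι := by
  have descent (T : ℕ) : ∀ a ≠ 0, toBilin' A a a = 0 → (∀ i, |a i| ≤ T) →
      ∃ b ≠ 0, toBilin' A b b = 0 ∧ ∀ i, |b i| ≤ (Q : ℤ) ^ Fintype.card ι := by
    induction T with
    | zero =>
      intro a ha₀ ha haT
      exact ⟨a, ha₀, ha, fun i => (haT i).trans (by positivity)⟩
    | succ T ih =>
      intro a ha₀ ha haT
      obtain hT | hT := le_or_gt (T + 1) (Q ^ Fintype.card ι)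
      · exact ⟨a, ha₀, ha, fun i => (haT i).trans (by exact_mod_cast hT)⟩
      · obtain ⟨b, hb₀, hb, hbT⟩ := exists_smaller_isotropic hA hG hQ hGQ ha₀ ha haT hT
        exact ih b hb₀ hb fun i => Int.lt_add_one_iff.mp (by exact_mod_cast hbT i)
  refine descent (Finset.univ.sup fun i => (z i).natAbs) z hz₀ hz fun i => ?_
  rw [Int.abs_eq_natAbs]
  exact_mod_cast Finset.le_sup (f := fun i => (z i).natAbs) (Finset.mem_univ i)

end Cassels

section RankFactorization

variable {K m n : Type*} [Field K]

lemma exists_eq_mul_submatrix [Finite m] [Fintype n] (A : Matrix m n K) {r : ℕ}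
    (hr : A.rank = r) :
    ∃ (a : Fin r → m) (R : Matrix m (Fin r) K), A = R * A.submatrix a id := by
  rw [rank_eq_finrank_span_row] at hr
  subst hr
  obtain ⟨f, hf, hspan, -⟩ := Submodule.exists_fun_fin_finrank_span_eq K (Set.range A.row)
  choose a ha using hf
  have hmem (i : m) : A.row i ∈ Submodule.span K (Set.range f) :=
    hspan.ge (Submodule.subset_span ⟨i, rfl⟩)
  choose R hR using fun i => (Submodule.mem_span_range_iff_exists_fun K).mp (hmem i)
  refine ⟨a, of R, ?_⟩
  ext i j
  rw [← row_apply A, ← hR i, mul_apply, Finset.sum_apply]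
  simp only [← ha, Pi.smul_apply, row_apply, smul_eq_mul, submatrix_apply, id, of_apply]

lemma det_ne_zero_of_card_le_rank [Fintype n] [DecidableEq n] {S : Matrix n n K}
    (hS : Fintype.card n ≤ S.rank) : S.det ≠ 0 := by
  rw [rank_eq_finrank_span_row] at hS
  have hli : LinearIndependent K S.row :=
    linearIndependent_iff_card_eq_finrank_span.mpr (hS.antisymm (finrank_range_le_card S.row))
  exact (S.isUnit_iff_isUnit_det.mp (linearIndependent_rows_iff_isUnit.mp hli)).ne_zero

lemma exists_det_submatrix_id_ne_zero [Finite n] {L : ℕ} {B : Matrix (Fin L) n K}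
    (hB : LinearIndependent K B.row) : ∃ s : Fin L → n, (B.submatrix id s).det ≠ 0 := by
  have := Fintype.ofFinite n
  have hrank : Bᵀ.rank = L := by rw [rank_transpose, hB.rank_matrix, Fintype.card_fin]
  obtain ⟨s, R, hR⟩ := exists_eq_mul_submatrix Bᵀ hrank
  refine ⟨s, det_ne_zero_of_card_le_rank ?_⟩
  calc Fintype.card (Fin L) = Bᵀ.rank := by rw [Fintype.card_fin, hrank]
    _ = (R * Bᵀ.submatrix s id).rank := by rw [← hR]
    _ ≤ (Bᵀ.submatrix s id).rank := rank_mul_le_right _ _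
    _ = (B.submatrix id s).rank := by
        rw [← rank_transpose, transpose_submatrix, transpose_transpose]

lemma exists_det_principal_submatrix_ne_zero [Fintype n] {A : Matrix n n K} (hA : A.IsSymm)
    {r : ℕ} (hr : A.rank = r) :
    ∃ (a : Fin r → n) (R : Matrix n (Fin r) K), A = R * A.submatrix a id ∧
      A = R * A.submatrix a a * Rᵀ ∧ (A.submatrix a a).det ≠ 0 := by
  obtain ⟨a, R, hR⟩ := exists_eq_mul_submatrix A hr
  have hrows : A.submatrix a id = A.submatrix a a * Rᵀ := by
    conv_lhs => rw [← hA.eq, hR, transpose_mul, transpose_submatrix, hA.eq]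
    rfl
  refine ⟨a, R, hR, by rwa [Matrix.mul_assoc, ← hrows], det_ne_zero_of_card_le_rank ?_⟩
  calc Fintype.card (Fin r) = A.rank := by rw [Fintype.card_fin, hr]
    _ = (R * A.submatrix a id).rank := by rw [← hR]
    _ ≤ (A.submatrix a id).rank := rank_mul_le_right _ _
    _ ≤ (A.submatrix a a).rank := hrows ▸ rank_mul_le_left _ _

end RankFactorization

section RadicalProjection

variable {R ι κ : Type*} [CommRing R] [Fintype κ] [DecidableEq ι] [DecidableEq κ]

/-- A multiple of a projection onto the kernel of `A`, when the rows of `A` indexed by `a` span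
its row space and `a` selects a nonsingular principal submatrix. -/
def kernelProjection (A : Matrix ι ι R) (a : κ → ι) : Matrix ι ι R :=
  (A.submatrix a a).det • 1 -
    (1 : Matrix ι ι R).submatrix id a * (A.submatrix a a).adjugate * A.submatrix a id

lemma map_kernelProjection {S : Type*} [CommRing S] (φ : R →+* S) (A : Matrix ι ι R)
    (a : κ → ι) : (kernelProjection A a).map φ = kernelProjection (A.map φ) a := by
  have hE : ((1 : Matrix ι ι R).submatrix id a).map φ = (1 : Matrix ι ι S).submatrix id a := by
    rw [← submatrix_map, Matrix.map_one φ (map_zero φ) (map_one φ)]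
  have hrows : (A.submatrix a id).map φ = (A.map φ).submatrix a id := rfl
  have hadj : (A.submatrix a a).adjugate.map φ = ((A.map φ).submatrix a a).adjugate :=
    φ.map_adjugate _
  have hdet : φ (A.submatrix a a).det = ((A.map φ).submatrix a a).det := φ.map_det _
  rw [kernelProjection, kernelProjection, Matrix.map_sub φ (map_sub φ), Matrix.map_mul,
    Matrix.map_mul, hE, hadj, Matrix.map_smul' _ _ _ (map_mul φ), hdet,
    Matrix.map_one φ (map_zero φ) (map_one φ), hrows]

variable [Fintype ι]

lemma mul_kernelProjection {A : Matrix ι ι R} {a : κ → ι} {T : Matrix ι κ R}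
    (hT : A = T * A.submatrix a id) : A * kernelProjection A a = 0 := by
  have hcols : A * (1 : Matrix ι ι R).submatrix id a = T * A.submatrix a a := by
    calc A * (1 : Matrix ι ι R).submatrix id a = A.submatrix id a :=
          mul_submatrix_one (Equiv.refl ι) a A
      _ = (T * A.submatrix a id).submatrix id a := by rw [← hT]
  rw [kernelProjection, Matrix.mul_sub, ← Matrix.mul_assoc, ← Matrix.mul_assoc, hcols,
    Matrix.mul_assoc T, mul_adjugate, Matrix.mul_smul, Matrix.mul_smul, Matrix.mul_one,
    Matrix.mul_one, Matrix.smul_mul, ← hT, sub_self]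

lemma kernelProjection_mulVec (A : Matrix ι ι R) (a : κ → ι) {x : ι → R} (hx : A *ᵥ x = 0) :
    kernelProjection A a *ᵥ x = (A.submatrix a a).det • x := by
  have hax : A.submatrix a id *ᵥ x = 0 := funext fun k => congrFun hx (a k)
  rw [kernelProjection, sub_mulVec, smul_mulVec, one_mulVec, ← mulVec_mulVec, hax, mulVec_zero,
    sub_zero]

end RadicalProjection

section RadicalProjectionBound

open scoped Nat

variable {l m n : Type*} [Fintype n]

lemma abs_mulVec_le {M : Matrix m n ℤ} {x : n → ℤ} {a b : ℤ} (hM : ∀ i j, |M i j| ≤ a)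
    (hx : ∀ j, |x j| ≤ b) (i : m) : |(M *ᵥ x) i| ≤ Fintype.card n * (a * b) := by
  rw [mulVec, dotProduct, ← nsmul_eq_mul]
  refine (Finset.abs_sum_le_sum_abs _ _).trans (Finset.sum_le_card_nsmul _ _ _ fun k _ => ?_)
  rw [abs_mul]
  exact mul_le_mul (hM i k) (hx k) (abs_nonneg _) ((abs_nonneg _).trans (hM i k))

lemma abs_mul_apply_le {M : Matrix l n ℤ} {N : Matrix n m ℤ} {a b : ℤ}
    (hM : ∀ i j, |M i j| ≤ a) (hN : ∀ i j, |N i j| ≤ b) (i : l) (j : m) :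
    |(M * N) i j| ≤ Fintype.card n * (a * b) :=
  abs_mulVec_le hM (fun k => hN k j) i

lemma abs_one_apply_le [DecidableEq m] (i j : m) : |(1 : Matrix m m ℤ) i j| ≤ 1 := by
  rw [one_apply]
  split_ifs <;> simp

variable [DecidableEq n]

lemma abs_det_le {S : Matrix n n ℤ} {G : ℤ} (hS : ∀ i j, |S i j| ≤ G) :
    |S.det| ≤ (Fintype.card n)! * G ^ Fintype.card n := by
  simpa using det_le (abv := AbsoluteValue.abs) hS

lemma abs_adjugate_le {S : Matrix n n ℤ} {G : ℤ} (hG : 1 ≤ G) (hS : ∀ i j, |S i j| ≤ G)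
    (i j : n) : |S.adjugate i j| ≤ (Fintype.card n)! * G ^ Fintype.card n := by
  rw [adjugate_apply]
  refine abs_det_le fun k l => ?_
  rw [updateRow_apply]
  split_ifs
  · rw [← one_eq_pi_single]
    exact (abs_one_apply_le i l).trans hG
  · exact hS k l

lemma abs_kernelProjection_le [DecidableEq m] {A : Matrix m m ℤ} {G : ℤ} (hG : 1 ≤ G)
    (hA : ∀ i j, |A i j| ≤ G) (a : n → m) (i j : m) :
    |kernelProjection A a i j| ≤
      (Fintype.card n ^ 2 + 1) * (Fintype.card n)! * G ^ (Fintype.card n + 1) := by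
  set r := Fintype.card n
  set S := A.submatrix a a
  set E := (1 : Matrix m m ℤ).submatrix id a
  have hdet : |S.det * (1 : Matrix m m ℤ) i j| ≤ r ! * G ^ (r + 1) := by
    rw [abs_mul, ← mul_one (r ! * G ^ (r + 1) : ℤ)]
    gcongr
    · exact (abs_det_le fun k l => hA _ _).trans (by gcongr; lia)
    · exact abs_one_apply_le i j
  have hprod : |(E * S.adjugate * A.submatrix a id) i j| ≤ r * (r * (1 * (r ! * G ^ r)) * G) :=
    abs_mul_apply_le (abs_mul_apply_le (fun k l => abs_one_apply_le k (a l))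
      (abs_adjugate_le hG fun k l => hA _ _)) (fun k l => hA _ _) i j
  calc |kernelProjection A a i j|
      ≤ |S.det * (1 : Matrix m m ℤ) i j| + |(E * S.adjugate * A.submatrix a id) i j| := abs_sub _ _
    _ ≤ r ! * G ^ (r + 1) + r * (r * (1 * (r ! * G ^ r)) * G) := add_le_add hdet hprod
    _ = (r ^ 2 + 1) * r ! * G ^ (r + 1) := by ring

end RadicalProjectionBound

section RationalVectors

variable {ι : Type*}

/-- The inclusion of integer vectors into rational vectors. -/
def toRat : (ι → ℤ) →ₗ[ℤ] ι → ℚ := (Algebra.linearMap ℤ ℚ).compLeft ι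

lemma toRat_apply (x : ι → ℤ) (i : ι) : toRat x i = x i := rfl

lemma toRat_eq_comp (x : ι → ℤ) : toRat x = Int.castRingHom ℚ ∘ x := rfl

lemma toRat_injective : Function.Injective (toRat : (ι → ℤ) → ι → ℚ) :=
  fun _ _ h => funext fun i => Int.cast_injective (congrFun h i)

lemma exists_toRat_eq_smul [Finite ι] (x : ι → ℚ) :
    ∃ (c : ℤ) (z : ι → ℤ), c ≠ 0 ∧ toRat z = (c : ℚ) • x := by
  obtain ⟨⟨c, hc⟩, hx⟩ := IsLocalization.exist_integer_multiples_of_finite (nonZeroDivisors ℤ) x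
  choose z hz using hx
  exact ⟨c, z, nonZeroDivisors.ne_zero hc, funext fun i => by simpa [toRat_apply] using hz i⟩

lemma toRat_mulVec {m : Type*} [Fintype ι] (A : Matrix m ι ℤ) (x : ι → ℤ) :
    toRat (A *ᵥ x) = A.map (Int.castRingHom ℚ) *ᵥ toRat x :=
  funext fun i => RingHom.map_mulVec (Int.castRingHom ℚ) A x i

lemma toBilin'_mulVec {R κ : Type*} [CommRing R] [Fintype ι] [DecidableEq ι] [Fintype κ]
    [DecidableEq κ] (A : Matrix ι ι R) (E : Matrix ι κ R) (x y : κ → R) :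
    toBilin' A (E *ᵥ x) (E *ᵥ y) = toBilin' (Eᵀ * A * E) x y :=
  LinearMap.congr_fun₂ (toBilin'_comp A E E) x y

variable [Fintype ι] [DecidableEq ι]

lemma toBilin'_toRat (A : Matrix ι ι ℤ) (x y : ι → ℤ) :
    toBilin' (A.map (Int.castRingHom ℚ)) (toRat x) (toRat y) = toBilin' A x y :=
  (map_toBilin' (Int.castRingHom ℚ) A x y).symm

end RationalVectors

section NonradicalZero

variable {ι : Type*} [Fintype ι] {A : Matrix ι ι ℤ} {G : ℕ}

lemma exists_int_principal_submatrix (hA : A.IsSymm) :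
    ∃ r ≤ Fintype.card ι, ∃ (a : Fin r → ι) (R : Matrix ι (Fin r) ℚ),
      A.map (Int.castRingHom ℚ) = R * (A.map (Int.castRingHom ℚ)).submatrix a id ∧
      A.map (Int.castRingHom ℚ) = R * (A.submatrix a a).map (Int.castRingHom ℚ) * Rᵀ ∧
      (A.submatrix a a).det ≠ 0 := by
  obtain ⟨a, R, hR, hRR, hdet⟩ :=
    exists_det_principal_submatrix_ne_zero (hA.map (Int.castRingHom ℚ)) rfl
  refine ⟨_, rank_le_card_width _, a, R, hR, hRR, fun h => hdet ?_⟩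
  exact ((Int.castRingHom ℚ).map_det (A.submatrix a a)).symm.trans (by rw [h, map_zero])

open scoped Nat in
lemma exists_int_kernel_projection (hA : A.IsSymm) (hG : ∀ i j, |A i j| ≤ G) (hG₀ : 1 ≤ G) :
    ∃ (P : Matrix ι ι ℤ) (D : ℤ), D ≠ 0 ∧ A * P = 0 ∧
      (∀ x : ι → ℚ, A.map (Int.castRingHom ℚ) *ᵥ x = 0 →
        P.map (Int.castRingHom ℚ) *ᵥ x = (D : ℚ) • x) ∧
      ∀ i j, |P i j| ≤
        (Fintype.card ι ^ 2 + 1) * (Fintype.card ι)! * (G : ℤ) ^ (Fintype.card ι + 1) := by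
  classical
  obtain ⟨r, hr, a, R, hR, -, hdet⟩ := exists_int_principal_submatrix hA
  have hG₁ : (1 : ℤ) ≤ G := by exact_mod_cast hG₀
  refine ⟨kernelProjection A a, (A.submatrix a a).det, hdet, ?_, fun x hx => ?_, fun i j => ?_⟩
  · apply map_injective (Int.castRingHom ℚ).injective_int
    change (A * kernelProjection A a).map _ = (0 : Matrix ι ι ℤ).map _
    rw [Matrix.map_mul, map_kernelProjection, mul_kernelProjection hR,
      Matrix.map_zero _ (map_zero _)]
  · rw [map_kernelProjection, kernelProjection_mulVec _ _ hx]
    exact congrArg (· • x) ((Int.castRingHom ℚ).map_det (A.submatrix a a)).symm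
  · refine (abs_kernelProjection_le hG₁ hG a i j).trans ?_
    rw [Fintype.card_fin]
    gcongr

variable [DecidableEq ι]

lemma exists_small_isotropic_of_rat {κ : Type*} [Fintype κ] [DecidableEq κ] {S : Matrix κ κ ℤ}
    (hS : S.IsSymm) (hG : ∀ i j, |S i j| ≤ G) (hG₀ : 1 ≤ G) {u : κ → ℚ} (hu₀ : u ≠ 0)
    (hu : toBilin' (S.map (Int.castRingHom ℚ)) u u = 0) :
    ∃ w ≠ 0, toBilin' S w w = 0 ∧
      ∀ i, |w i| ≤ (3 * Fintype.card κ ^ 2 * G : ℤ) ^ Fintype.card κ := by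
  obtain ⟨c, z, hc, hz⟩ := exists_toRat_eq_smul u
  have hz₀ : z ≠ 0 := by
    rintro rfl
    exact smul_ne_zero (Int.cast_ne_zero.mpr hc) hu₀ (by rw [← hz, map_zero])
  have hzz : toBilin' S z z = 0 := by
    have : (toBilin' S z z : ℚ) = 0 := by
      rw [← toBilin'_toRat, hz, map_smul, map_smul, LinearMap.smul_apply, hu, smul_zero, smul_zero]
    exact_mod_cast this
  have : Nonempty κ := (Function.ne_iff.mp hu₀).nonempty
  have hQ : 0 < 3 * Fintype.card κ ^ 2 * G := by
    have := Fintype.card_pos (α := κ)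
    positivity
  exact_mod_cast exists_small_isotropic hS hG hQ (Nat.le_self_pow two_ne_zero _) hz₀ hzz

lemma exists_small_isotropic_mulVec_ne_zero (hA : A.IsSymm) (hG : ∀ i j, |A i j| ≤ G)
    (hG₀ : 1 ≤ G) {z : ι → ℚ} (hz : toBilin' (A.map (Int.castRingHom ℚ)) z z = 0)
    (hAz : A.map (Int.castRingHom ℚ) *ᵥ z ≠ 0) :
    ∃ y, toBilin' A y y = 0 ∧ A *ᵥ y ≠ 0 ∧ ∀ i, |y i| ≤
      Fintype.card ι * (3 * Fintype.card ι ^ 2 * G : ℤ) ^ Fintype.card ι := by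
  obtain ⟨r, hr, a, R, -, hR, hdet⟩ := exists_int_principal_submatrix hA
  have hu₀ : Rᵀ *ᵥ z ≠ 0 := by
    intro h
    rw [hR, ← mulVec_mulVec, h, mulVec_zero] at hAz
    exact hAz rfl
  have hu : toBilin' ((A.submatrix a a).map (Int.castRingHom ℚ)) (Rᵀ *ᵥ z) (Rᵀ *ᵥ z) = 0 := by
    rw [toBilin'_mulVec, transpose_transpose, ← hR, hz]
  obtain ⟨w, hw₀, hw, hwG⟩ :=
    exists_small_isotropic_of_rat (hA.submatrix a) (fun i j => hG _ _) hG₀ hu₀ hu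
  set E : Matrix ι (Fin r) ℤ := (1 : Matrix ι ι ℤ).submatrix id a
  have hE : Eᵀ * A = A.submatrix a id := by
    rw [transpose_submatrix, transpose_one]
    exact one_submatrix_mul a (Equiv.refl ι) A
  have hEE : Eᵀ * A * E = A.submatrix a a := hE ▸ mul_submatrix_one (Equiv.refl ι) a _
  refine ⟨E *ᵥ w, by rw [toBilin'_mulVec, hEE, hw], fun h => hw₀ ?_, fun i => ?_⟩
  · apply eq_zero_of_mulVec_eq_zero hdet
    rw [← hEE, ← mulVec_mulVec, ← mulVec_mulVec, h, mulVec_zero]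
  · calc |(E *ᵥ w) i|
        ≤ Fintype.card (Fin r) * (1 * (3 * Fintype.card (Fin r) ^ 2 * G) ^ Fintype.card (Fin r)) :=
          abs_mulVec_le (fun j k => abs_one_apply_le j (a k)) hwG i
      _ ≤ Fintype.card ι * (3 * Fintype.card ι ^ 2 * G) ^ Fintype.card ι := by
          have hr₀ : 0 < r := (Function.ne_iff.mp hw₀).choose.pos
          have hbase : 1 ≤ 3 * Fintype.card ι ^ 2 * G :=
            Nat.one_le_iff_ne_zero.mpr (by have := hr₀.trans_le hr; positivity)
          rw [Fintype.card_fin, one_mul]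
          norm_cast
          exact Nat.mul_le_mul hr ((Nat.pow_le_pow_left (by gcongr) r).trans
            (Nat.pow_le_pow_right hbase hr))

end NonradicalZero

section IsotropicSubspaces

variable {K V : Type*} [Field K] [AddCommGroup V] [Module K V]

lemma le_span_setOf_apply_ne_zero {W : Submodule K V} (ℓ : V →ₗ[K] K) {w₀ : V} (hw₀ : w₀ ∈ W)
    (hℓ : ℓ w₀ ≠ 0) : W ≤ Submodule.span K {w | w ∈ W ∧ ℓ w ≠ 0} := by
  intro w hw
  have hmem : w₀ ∈ Submodule.span K {w | w ∈ W ∧ ℓ w ≠ 0} := Submodule.subset_span ⟨hw₀, hℓ⟩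
  by_cases h : ℓ w = 0
  · rw [← Submodule.add_mem_iff_left _ hmem]
    exact Submodule.subset_span ⟨W.add_mem hw hw₀, by rwa [map_add, h, zero_add]⟩
  · exact Submodule.subset_span ⟨hw, h⟩

variable [FiniteDimensional K V]

lemma finrank_le_finrank_inf_ker_add_one (W : Submodule K V) (ℓ : V →ₗ[K] K) :
    Module.finrank K W ≤ Module.finrank K ↥(W ⊓ LinearMap.ker ℓ) + 1 := by
  have hdim := Submodule.finrank_sup_add_finrank_inf_eq W (LinearMap.ker ℓ)
  have hker := LinearMap.finrank_range_add_finrank_ker ℓ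
  have hrange := Submodule.finrank_le (LinearMap.range ℓ)
  have hsup := Submodule.finrank_le (W ⊔ LinearMap.ker ℓ)
  rw [Module.finrank_self] at hrange
  lia

/-- When `W` is orthogonal to `y`, trade a hyperplane of `W` for the line spanned by `z`. -/
lemma exists_isotropic_finrank_le_not_orthogonal {B : LinearMap.BilinForm K V} (hB : B.IsSymm)
    {W : Submodule K V} (hW : ∀ w ∈ W, B w w = 0) {y z : V} (hz : B z z = 0) (hzy : B z y ≠ 0) :
    ∃ W' : Submodule K V, Module.finrank K W ≤ Module.finrank K W' ∧ (∀ w ∈ W', B w w = 0) ∧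
      ∃ w ∈ W', B w y ≠ 0 := by
  by_cases hWy : ∀ w ∈ W, B w y = 0
  · set W₀ := W ⊓ LinearMap.ker (B z)
    have hz_mem : z ∈ W₀ ⊔ K ∙ z :=
      Submodule.mem_sup_right (Submodule.mem_span_singleton_self z)
    refine ⟨W₀ ⊔ K ∙ z, ?_, fun w hw => ?_, z, hz_mem, hzy⟩
    · have hlt : W₀ < W₀ ⊔ K ∙ z :=
        lt_of_le_of_ne le_sup_left fun h => hzy (hWy z (h ▸ hz_mem : z ∈ W₀).1)
      exact (finrank_le_finrank_inf_ker_add_one W (B z)).trans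
        (Submodule.finrank_lt_finrank_of_lt hlt)
    · obtain ⟨w₀, ⟨hw₀, hzw₀⟩, v, hv, rfl⟩ := Submodule.mem_sup.mp hw
      obtain ⟨c, rfl⟩ := Submodule.mem_span_singleton.mp hv
      have hzw₀ : B z w₀ = 0 := hzw₀
      simp [hB.eq w₀ z, hzw₀, hz, hW w₀ hw₀]
  · push Not at hWy
    exact ⟨W, le_rfl, hW, hWy⟩

end IsotropicSubspaces

section NonradicalZeroAvoiding

variable {K ι : Type*} [Field K] [CharZero K]

lemma exists_nat_apply_ne_zero_and_apply_ne_zero [Finite ι] {ℓ₁ ℓ₂ : (ι → K) →ₗ[K] K}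
    (h₁ : ℓ₁ ≠ 0) (h₂ : ℓ₂ ≠ 0) :
    ∃ a : ι → ℕ, (∀ i, a i ≤ 2) ∧ ℓ₁ (fun i => a i) ≠ 0 ∧ ℓ₂ (fun i => a i) ≠ 0 := by
  obtain ⟨p₁, hdeg₁, hp₁⟩ := exists_totalDegree_le_one_eval_eq ℓ₁
  obtain ⟨p₂, hdeg₂, hp₂⟩ := exists_totalDegree_le_one_eval_eq ℓ₂
  have hp₁₀ : p₁ ≠ 0 := by
    rintro rfl
    exact h₁ (LinearMap.ext fun x => by rw [← hp₁, map_zero, LinearMap.zero_apply])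
  have hp₂₀ : p₂ ≠ 0 := by
    rintro rfl
    exact h₂ (LinearMap.ext fun x => by rw [← hp₂, map_zero, LinearMap.zero_apply])
  obtain ⟨a, ha, hne⟩ := exists_nat_eval_ne_zero
    ((MvPolynomial.totalDegree_mul p₁ p₂).trans (add_le_add hdeg₁ hdeg₂)) (mul_ne_zero hp₁₀ hp₂₀)
  rw [map_mul, hp₁, hp₂] at hne
  exact ⟨a, ha, left_ne_zero_of_mul hne, right_ne_zero_of_mul hne⟩

lemma exists_isotropic_eval_ne_zero_nonradical {B : LinearMap.BilinForm K (ι → K)} (hB : B.IsSymm)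
    {P : MvPolynomial ι K} {z : ι → K} (hz : B z z = 0) (hPz : MvPolynomial.eval z P ≠ 0)
    {y : ι → K} (hy : B y y = 0) (hBy : B y ≠ 0) :
    ∃ z', B z' z' = 0 ∧ MvPolynomial.eval z' P ≠ 0 ∧ B z' ≠ 0 := by
  by_cases hBz : B z = 0
  · obtain ⟨s, hs, hPs⟩ := exists_ne_zero_eval_add_smul_ne_zero hPz y
    refine ⟨z + s • y, ?_, hPs, ?_⟩
    · simp [hBz, hB.eq y z, hy]
    · rw [map_add, hBz, zero_add, map_smul]
      exact smul_ne_zero hs hBy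
  · exact ⟨z, hz, hPz, hBz⟩

end NonradicalZeroAvoiding

section ReflectionMap

open MvPolynomial

variable {R ι : Type*} [CommRing R] [Fintype ι] [DecidableEq ι] (A : Matrix ι ι R) (y : ι → R)

/-- The coordinates of the polynomial map `(a, t) ↦ a • scaledReflection B y t`, where `B` is the
bilinear form of `A`; the variable `none` stands for `a`, the variables `some i` for `t`. Over a
field of characteristic `≠ 2` and for isotropic `y`, its values are isotropic and include every
isotropic vector that is not orthogonal to `y`. -/
noncomputable def reflectionMap (k : ι) : MvPolynomial (Option ι) R :=
  X none * scaledReflection (toBilin' (A.map C)) (C ∘ y) (fun i => X (some i)) k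

lemma totalDegree_reflectionMap_le [Nontrivial R] (k : ι) :
    (reflectionMap A y k).totalDegree ≤ 3 := by
  set t : ι → MvPolynomial (Option ι) R := fun i => X (some i)
  have ht (i : ι) : (t i).totalDegree = 1 := totalDegree_X _
  have htt : (toBilin' (A.map C) t t).totalDegree ≤ 2 := by
    rw [toBilin'_apply]
    refine totalDegree_finsetSum_le fun i _ => totalDegree_finsetSum_le fun j _ => ?_
    grw [totalDegree_mul, totalDegree_mul, map_apply, totalDegree_C, ht, ht]
  have hty : (toBilin' (A.map C) t (C ∘ y)).totalDegree ≤ 1 := by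
    rw [toBilin'_apply]
    refine totalDegree_finsetSum_le fun i _ => totalDegree_finsetSum_le fun j _ => ?_
    grw [totalDegree_mul, totalDegree_mul, map_apply, Function.comp_apply, totalDegree_C,
      totalDegree_C, ht]
  have htwo : (2 : MvPolynomial (Option ι) R).totalDegree = 0 := totalDegree_C 2
  have hreflection : (scaledReflection (toBilin' (A.map C)) (C ∘ y) t k).totalDegree ≤ 2 := by
    refine (totalDegree_sub _ _).trans (max_le ?_ ?_)
    · rw [Pi.smul_apply, smul_eq_mul]
      grw [totalDegree_mul, htt, Function.comp_apply, totalDegree_C]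
    · rw [Pi.smul_apply, smul_eq_mul]
      grw [totalDegree_mul, totalDegree_mul, htwo, hty, ht]
  rw [reflectionMap]
  grw [totalDegree_mul, totalDegree_X, hreflection]

lemma eval_reflectionMap (a : Option ι → R) :
    (fun k => eval a (reflectionMap A y k)) =
      a none • scaledReflection (toBilin' A) y (fun i => a (some i)) := by
  have h := map_comp_scaledReflection (eval a) (A.map C) (C ∘ y) (fun i => X (some i))
  have hA : (A.map C).map (eval a) = A := by ext; simp
  have hy : eval a ∘ C ∘ y = y := by ext; simp
  have ht : (eval a ∘ fun i => X (some i)) = fun i => a (some i) := by ext; simp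
  rw [hA, hy, ht] at h
  rw [← h]
  funext k
  simp [reflectionMap]

end ReflectionMap

section SmallZeros

variable {ι : Type*} [Fintype ι] [DecidableEq ι]

lemma toBilin'_eq_zero_iff {R : Type*} [CommRing R] {A : Matrix ι ι R} (hA : A.IsSymm)
    {x : ι → R} : toBilin' A x = 0 ↔ A *ᵥ x = 0 := by
  rw [← dotProduct_eq_zero_iff, LinearMap.ext_iff]
  refine forall_congr' fun w => ?_
  rw [(isSymm_toBilin'_iff_isSymm.mpr hA).eq, toBilin'_apply', dotProduct_comm,
    LinearMap.zero_apply]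

variable {A : Matrix ι ι ℤ} {G : ℕ}

lemma exists_small_isotropic_not_orthogonal (hA : A.IsSymm) (hG : ∀ i j, |A i j| ≤ G)
    (hG₀ : 1 ≤ G) {z : ι → ℚ} (hz : toBilin' (A.map (Int.castRingHom ℚ)) z z = 0)
    (hBz : toBilin' (A.map (Int.castRingHom ℚ)) z ≠ 0) :
    ∃ y, toBilin' A y y = 0 ∧ toBilin' (A.map (Int.castRingHom ℚ)) z (toRat y) ≠ 0 ∧
      ∀ i, |y i| ≤ 12 * Fintype.card ι ^ 2 * G *
        (Fintype.card ι * (3 * Fintype.card ι ^ 2 * G : ℤ) ^ Fintype.card ι) := by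
  have hA' := hA.map (Int.castRingHom ℚ)
  set B := toBilin' (A.map (Int.castRingHom ℚ))
  have hB : B.IsSymm := isSymm_toBilin'_iff_isSymm.mpr hA'
  obtain ⟨y, hy, hAy, hyY⟩ := exists_small_isotropic_mulVec_ne_zero hA hG hG₀ hz
    (fun h => hBz ((toBilin'_eq_zero_iff hA').mpr h))
  set Y : ℤ := Fintype.card ι * (3 * Fintype.card ι ^ 2 * G : ℤ) ^ Fintype.card ι
  have hBy : B (toRat y) ≠ 0 := by
    rw [Ne, toBilin'_eq_zero_iff hA', ← toRat_mulVec]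
    exact fun h => hAy (toRat_injective (h.trans (map_zero _).symm))
  by_cases hzy : B z (toRat y) = 0
  · obtain ⟨t, ht, hty, htz⟩ := exists_nat_apply_ne_zero_and_apply_ne_zero hBy hBz
    refine ⟨scaledReflection (toBilin' A) y (fun i => t i),
      scaledReflection_isotropic (isSymm_toBilin'_iff_isSymm.mpr hA) hy _, ?_, fun i => ?_⟩
    · have hB_reflection : B z (toRat (scaledReflection (toBilin' A) y (fun i => t i))) =
          -(2 * B (toRat y) (fun i => t i) * B z (fun i => t i)) := by
        rw [toRat_eq_comp, map_comp_scaledReflection]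
        change B z (scaledReflection B (toRat y) (fun i => ((t i : ℤ) : ℚ))) = _
        simp [scaledReflection, hzy, hB.eq (toRat y)]
      rw [hB_reflection]
      exact neg_ne_zero.mpr (mul_ne_zero (mul_ne_zero two_ne_zero hty) htz)
    · calc |scaledReflection (toBilin' A) y (fun i => t i) i|
          ≤ 3 * Fintype.card ι ^ 2 * G * 2 ^ 2 * Y :=
            abs_scaledReflection_le hG hyY (fun j => by simpa using mod_cast ht j) i
        _ = 12 * Fintype.card ι ^ 2 * G * Y := by ring
  · refine ⟨y, hy, hzy, fun i => (hyY i).trans (le_mul_of_one_le_left (by positivity) ?_)⟩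
    have := Fintype.card_pos_iff.mpr ⟨i⟩
    exact_mod_cast Nat.one_le_iff_ne_zero.mpr (by positivity)

/-- The integer isotropic vectors of `A` at which `P` does not vanish, with entries at most `X` in
absolute value: the candidates for the small zeros outside a hypersurface. -/
def smallZeros (A : Matrix ι ι ℤ) (P : MvPolynomial ι ℚ) (X : ℤ) : Set (ι → ℤ) :=
  {x | toBilin' A x x = 0 ∧ MvPolynomial.eval (toRat x) P ≠ 0 ∧ ∀ i, |x i| ≤ X}

lemma smallZeros_mono {P : MvPolynomial ι ℚ} : Monotone (smallZeros A P) :=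
  fun _ _ hXY _ ⟨hx, hPx, hX⟩ => ⟨hx, hPx, fun i => (hX i).trans hXY⟩

lemma eval_reflectionMap_toRat (A : Matrix ι ι ℤ) (y : ι → ℤ) (a : Option ι → ℕ) :
    (fun k => MvPolynomial.eval (fun j => (a j : ℚ))
        (reflectionMap (A.map (Int.castRingHom ℚ)) (toRat y) k)) =
      toRat ((a none : ℤ) • scaledReflection (toBilin' A) y (fun i => a (some i))) := by
  rw [eval_reflectionMap, map_smul, toRat_eq_comp (scaledReflection _ _ _),
    map_comp_scaledReflection]
  funext k
  simp [Function.comp_def, toRat_eq_comp]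

lemma mem_span_smallZeros_of_not_orthogonal (hA : A.IsSymm) (hG : ∀ i j, |A i j| ≤ G)
    {P : MvPolynomial ι ℚ} {y : ι → ℤ} {Y : ℤ} (hy : toBilin' A y y = 0) (hY : ∀ i, |y i| ≤ Y)
    {z w : ι → ℚ} (hz : toBilin' (A.map (Int.castRingHom ℚ)) z z = 0)
    (hzy : toBilin' (A.map (Int.castRingHom ℚ)) z (toRat y) ≠ 0)
    (hPz : MvPolynomial.eval z P ≠ 0)
    (hw : toBilin' (A.map (Int.castRingHom ℚ)) w w = 0)
    (hwy : toBilin' (A.map (Int.castRingHom ℚ)) w (toRat y) ≠ 0) :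
    w ∈ Submodule.span ℚ (toRat '' smallZeros A P
      (3 * Fintype.card ι ^ 2 * G * Y * (3 * (P.totalDegree + 1)) ^ 3)) := by
  have mem_range {x : ι → ℚ} (hx : toBilin' (A.map (Int.castRingHom ℚ)) x x = 0)
      (hxy : toBilin' (A.map (Int.castRingHom ℚ)) x (toRat y) ≠ 0) :
      ∃ a, (fun k => MvPolynomial.eval a
        (reflectionMap (A.map (Int.castRingHom ℚ)) (toRat y) k)) = x := by
    refine ⟨fun j => j.elim (-(2 * toBilin' (A.map (Int.castRingHom ℚ)) x (toRat y)))⁻¹ x, ?_⟩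
    rw [eval_reflectionMap]
    simp only [Option.elim]
    rw [scaledReflection_of_isotropic hx, inv_smul_smul₀]
    exact neg_ne_zero.mpr (mul_ne_zero two_ne_zero hxy)
  obtain ⟨a₀, rfl⟩ := mem_range hz hzy
  obtain ⟨b, rfl⟩ := mem_range hw hwy
  refine Submodule.span_mono ?_
    (eval_mem_span_eval_ne_zero (totalDegree_reflectionMap_le _ _) hPz b)
  rintro _ ⟨hPx, a, ha, rfl⟩
  rw [eval_reflectionMap_toRat] at hPx ⊢
  refine Set.mem_image_of_mem _ ⟨?_, hPx, fun i => ?_⟩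
  · rw [map_smul, map_smul, LinearMap.smul_apply,
      scaledReflection_isotropic (isSymm_toBilin'_iff_isSymm.mpr hA) hy, smul_zero, smul_zero]
  · set T : ℤ := 3 * (P.totalDegree + 1)
    have haT (j : Option ι) : |(a j : ℤ)| ≤ T := by simpa [T] using mod_cast ha j
    calc |((a none : ℤ) • scaledReflection (toBilin' A) y (fun i => a (some i))) i|
        ≤ T * (3 * Fintype.card ι ^ 2 * G * T ^ 2 * Y) := by
          rw [Pi.smul_apply, smul_eq_mul, abs_mul]
          exact mul_le_mul (haT _) (abs_scaledReflection_le hG hY (fun j => haT _) i)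
            (abs_nonneg _) (by positivity)
      _ = 3 * Fintype.card ι ^ 2 * G * Y * T ^ 3 := by ring

open scoped Nat in
lemma mem_span_smallZeros_of_mulVec_eq_zero (hA : A.IsSymm) (hG : ∀ i j, |A i j| ≤ G)
    (hG₀ : 1 ≤ G) {P : MvPolynomial ι ℚ} {z w : ι → ℚ}
    (hz : A.map (Int.castRingHom ℚ) *ᵥ z = 0) (hPz : MvPolynomial.eval z P ≠ 0)
    (hw : A.map (Int.castRingHom ℚ) *ᵥ w = 0) :
    w ∈ Submodule.span ℚ (toRat '' smallZeros A P (Fintype.card ι *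
      ((Fintype.card ι ^ 2 + 1) * (Fintype.card ι)! * (G : ℤ) ^ (Fintype.card ι + 1) *
        (P.totalDegree + 1)))) := by
  obtain ⟨K, D, hD, hAK, hK, hKG⟩ := exists_int_kernel_projection hA hG hG₀
  set Φ := (K.map (Int.castRingHom ℚ)).toMvPolynomial
  have eval_Φ (a : ι → ℚ) :
      (fun i => MvPolynomial.eval a (Φ i)) = K.map (Int.castRingHom ℚ) *ᵥ a :=
    funext fun i => toMvPolynomial_eval_eq_apply _ _ _
  have mem_range {x : ι → ℚ} (hx : A.map (Int.castRingHom ℚ) *ᵥ x = 0) :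
      ∃ a, (fun i => MvPolynomial.eval a (Φ i)) = x :=
    ⟨(D : ℚ)⁻¹ • x, by
      rw [eval_Φ, mulVec_smul, hK x hx, inv_smul_smul₀ (Int.cast_ne_zero.mpr hD)]⟩
  obtain ⟨a₀, rfl⟩ := mem_range hz
  obtain ⟨b, rfl⟩ := mem_range hw
  refine Submodule.span_mono ?_
    (eval_mem_span_eval_ne_zero (toMvPolynomial_totalDegree_le _) hPz b)
  rintro _ ⟨hPx, a, ha, rfl⟩
  have hcast : (fun i => MvPolynomial.eval (fun j => (a j : ℚ)) (Φ i)) =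
      toRat (K *ᵥ fun j => (a j : ℤ)) := by
    rw [eval_Φ, toRat_mulVec]
    congr
  rw [hcast] at hPx ⊢
  refine Set.mem_image_of_mem _ ⟨?_, hPx, abs_mulVec_le hKG fun j => ?_⟩
  · rw [toBilin'_apply', mulVec_mulVec, hAK, zero_mulVec, dotProduct_zero]
  · simpa using mod_cast (one_mul (P.totalDegree + 1)) ▸ ha j

lemma finrank_le_finrank_span_smallZeros_of_nonradical (hA : A.IsSymm)
    (hG : ∀ i j, |A i j| ≤ G) (hG₀ : 1 ≤ G) {P : MvPolynomial ι ℚ} {z : ι → ℚ}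
    (hz : toBilin' (A.map (Int.castRingHom ℚ)) z z = 0) (hPz : MvPolynomial.eval z P ≠ 0)
    {y : ι → ℚ} (hy : toBilin' (A.map (Int.castRingHom ℚ)) y y = 0)
    (hBy : toBilin' (A.map (Int.castRingHom ℚ)) y ≠ 0) {W : Submodule ℚ (ι → ℚ)}
    (hW : ∀ w ∈ W, toBilin' (A.map (Int.castRingHom ℚ)) w w = 0) :
    Module.finrank ℚ W ≤ Module.finrank ℚ (Submodule.span ℚ (toRat '' smallZeros A P
      (3 * Fintype.card ι ^ 2 * G * (12 * Fintype.card ι ^ 2 * G *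
        (Fintype.card ι * (3 * Fintype.card ι ^ 2 * G : ℤ) ^ Fintype.card ι)) *
        (3 * (P.totalDegree + 1)) ^ 3))) := by
  have hB : (toBilin' (A.map (Int.castRingHom ℚ))).IsSymm :=
    isSymm_toBilin'_iff_isSymm.mpr (hA.map _)
  obtain ⟨z, hz, hPz, hBz⟩ := exists_isotropic_eval_ne_zero_nonradical hB hz hPz hy hBy
  obtain ⟨y, hy, hzy, hyY⟩ := exists_small_isotropic_not_orthogonal hA hG hG₀ hz hBz
  obtain ⟨W', hWW', hW', w₀, hw₀, hw₀y⟩ :=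
    exists_isotropic_finrank_le_not_orthogonal hB hW hz hzy
  refine hWW'.trans (Submodule.finrank_mono ?_)
  refine (le_span_setOf_apply_ne_zero
    ((toBilin' (A.map (Int.castRingHom ℚ))).flip (toRat y)) hw₀ hw₀y).trans ?_
  exact Submodule.span_le.mpr fun w ⟨hw, hwy⟩ =>
    mem_span_smallZeros_of_not_orthogonal hA hG hy hyY hz hzy hPz (hW' w hw) hwy

open scoped Nat in
theorem exists_finrank_le_finrank_span_smallZeros (ι : Type*) [Fintype ι] [DecidableEq ι]
    (M : ℕ) : ∃ C : ℕ, ∀ (A : Matrix ι ι ℤ) (G : ℕ) (P : MvPolynomial ι ℚ) (z : ι → ℚ)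
      (W : Submodule ℚ (ι → ℚ)), A.IsSymm → (∀ i j, |A i j| ≤ G) → 1 ≤ G → P.totalDegree ≤ M →
      toBilin' (A.map (Int.castRingHom ℚ)) z z = 0 → MvPolynomial.eval z P ≠ 0 →
      (∀ w ∈ W, toBilin' (A.map (Int.castRingHom ℚ)) w w = 0) →
      Module.finrank ℚ W ≤ Module.finrank ℚ (Submodule.span ℚ
        (toRat '' smallZeros A P (C * G ^ (Fintype.card ι + 2)))) := by
  set n := Fintype.card ι
  set C₁ := n * ((n ^ 2 + 1) * n ! * (M + 1))
  set C₂ := 36 * n ^ 5 * (3 * n ^ 2) ^ n * (3 * (M + 1)) ^ 3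
  refine ⟨C₁ + C₂, fun A G P z W hA hG hG₀ hP hz hPz hW => ?_⟩
  by_cases hrad : ∀ x, toBilin' (A.map (Int.castRingHom ℚ)) x x = 0 →
      toBilin' (A.map (Int.castRingHom ℚ)) x = 0
  · have hker {x : ι → ℚ} (hx : toBilin' (A.map (Int.castRingHom ℚ)) x x = 0) :
        A.map (Int.castRingHom ℚ) *ᵥ x = 0 := (toBilin'_eq_zero_iff (hA.map _)).mp (hrad x hx)
    refine Submodule.finrank_mono fun w hw => Submodule.span_mono
      (Set.image_mono (smallZeros_mono ?_))
      (mem_span_smallZeros_of_mulVec_eq_zero hA hG hG₀ (hker hz) hPz (hker (hW w hw)))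
    calc (n * ((n ^ 2 + 1) * n ! * G ^ (n + 1) * (P.totalDegree + 1)) : ℤ)
        ≤ n * ((n ^ 2 + 1) * n ! * G ^ (n + 2) * (M + 1)) := by
          gcongr
          · exact_mod_cast hG₀
          · lia
      _ = C₁ * G ^ (n + 2) := by push_cast [C₁]; ring
      _ ≤ (C₁ + C₂ : ℕ) * G ^ (n + 2) := by gcongr; lia
  · push Not at hrad
    obtain ⟨y, hy, hBy⟩ := hrad
    refine (finrank_le_finrank_span_smallZeros_of_nonradical hA hG hG₀ hz hPz hy hBy hW).trans
      (Submodule.finrank_mono (Submodule.span_mono (Set.image_mono (smallZeros_mono ?_))))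
    calc (3 * n ^ 2 * G * (12 * n ^ 2 * G * (n * (3 * n ^ 2 * G) ^ n)) *
          (3 * (P.totalDegree + 1)) ^ 3 : ℤ)
        ≤ 3 * n ^ 2 * G * (12 * n ^ 2 * G * (n * (3 * n ^ 2 * G) ^ n)) * (3 * (M + 1)) ^ 3 := by
          gcongr
      _ = C₂ * G ^ (n + 2) := by push_cast [C₂, mul_pow]; ring
      _ ≤ (C₁ + C₂ : ℕ) * G ^ (n + 2) := by gcongr; lia

end SmallZeros

section GramDeterminant

variable {κ ι : Type*} [Fintype κ]

lemma one_add_sum_le_prod_one_add {f : κ → ℝ} (hf : ∀ i, 0 ≤ f i) :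
    1 + ∑ i, f i ≤ ∏ i, (1 + f i) := by
  classical
  suffices ∀ s : Finset κ, 1 + ∑ i ∈ s, f i ≤ ∏ i ∈ s, (1 + f i) from this _
  intro s
  induction s using Finset.induction_on with
  | empty => simp
  | insert a s ha ih =>
    rw [Finset.sum_insert ha, Finset.prod_insert ha]
    nlinarith [hf a, Finset.sum_nonneg fun i (_ : i ∈ s) => hf i]

variable [DecidableEq κ]

lemma one_add_trace_le_det_one_add {P : Matrix κ κ ℝ} (hP : P.PosSemidef) :
    1 + P.trace ≤ (1 + P).det := by
  have hdet : (1 + P).det = ∏ i, (1 + hP.isHermitian.eigenvalues i) := by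
    have h := congrArg (Polynomial.eval (-1)) hP.isHermitian.charpoly_eq
    have hneg : scalar κ (-1) - P = -(1 + P) := by
      rw [map_neg, map_one, neg_add, sub_eq_add_neg]
    have hfactor (r : ℝ) : -1 - r = -(1 + r) := by ring
    simp only [eval_charpoly, hneg, det_neg, Polynomial.eval_prod, Polynomial.eval_sub,
      Polynomial.eval_X, Polynomial.eval_C, RCLike.ofReal_real_eq_id, id, hfactor,
      Finset.prod_neg] at h
    exact mul_left_cancel₀ (pow_ne_zero _ (neg_ne_zero.mpr one_ne_zero)) h
  rw [hdet, hP.isHermitian.trace_eq_sum_eigenvalues]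
  exact one_add_sum_le_prod_one_add hP.eigenvalues_nonneg

variable [Fintype ι]

lemma det_mul_mul_transpose {R : Type*} [CommRing R] (S : Matrix κ κ R) (X : Matrix κ ι R) :
    ((S * X) * (S * X)ᵀ).det = S.det ^ 2 * (X * Xᵀ).det := by
  rw [transpose_mul, ← Matrix.mul_assoc, Matrix.mul_assoc S, det_mul, det_mul, det_transpose]
  ring

lemma exists_reduced_form {B : Matrix κ ι ℤ} {s : κ → ι} (hs : (B.submatrix id s).det ≠ 0) :
    ∃ X : Matrix κ ι ℝ, X.submatrix id s = 1 ∧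
      ((B * Bᵀ).det : ℝ) = ((B.submatrix id s).det : ℝ) ^ 2 * (X * Xᵀ).det ∧
      ∀ i j, (((B.submatrix id s).adjugate * B) i j : ℝ) = (B.submatrix id s).det * X i j := by
  set φ := Int.castRingHom ℝ
  set S := (B.submatrix id s).map φ
  have hdetS : S.det = ((B.submatrix id s).det : ℝ) := (φ.map_det _).symm
  have hunit : IsUnit S.det := by
    rw [hdetS]
    exact isUnit_iff_ne_zero.mpr (Int.cast_ne_zero.mpr hs)
  have hfactor : S * (S⁻¹ * B.map φ) = B.map φ := mul_nonsing_inv_cancel_left _ _ hunit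
  refine ⟨S⁻¹ * B.map φ, nonsing_inv_mul _ hunit, ?_, fun i j => ?_⟩
  · rw [← hdetS, ← det_mul_mul_transpose, hfactor, ← transpose_map, ← Matrix.map_mul]
    exact φ.map_det _
  · have hadj : ((B.submatrix id s).adjugate * B).map φ = S.det • (S⁻¹ * B.map φ) := by
      rw [Matrix.map_mul, ← hfactor, ← Matrix.mul_assoc, ← RingHom.mapMatrix_apply,
        RingHom.map_adjugate, RingHom.mapMatrix_apply, adjugate_mul, Matrix.smul_mul,
        Matrix.one_mul, hfactor]
    rw [← hdetS]
    exact congrFun₂ hadj i j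

lemma posSemidef_mul_transpose_sub_one {κ : Type*} [Finite κ] [DecidableEq κ] {X : Matrix κ ι ℝ}
    {s : κ → ι} (hX : X.submatrix id s = 1) : (X * Xᵀ - 1).PosSemidef := by
  classical
  have := Fintype.ofFinite κ
  have hs : Function.Injective s := fun k l hkl => by
    by_contra hne
    have hkk := congrFun₂ hX k k
    have hkl' := congrFun₂ hX k l
    rw [submatrix_apply, ← hkl, ← submatrix_apply X id s, hkk, one_apply_eq, one_apply_ne hne]
      at hkl'
    exact one_ne_zero hkl'
  set E := (1 : Matrix ι ι ℝ).submatrix id s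
  have hXE : X * E = 1 := (mul_submatrix_one (Equiv.refl ι) s X).trans hX
  have hEE : Eᵀ * E = 1 := by
    ext k l
    simp [E, mul_apply, one_apply, hs.eq_iff]
  have hsq : X * Xᵀ - 1 = (X - Eᵀ) * (X - Eᵀ)ᴴ := by
    have hEX : Eᵀ * Xᵀ = 1 := by rw [← transpose_mul, hXE, transpose_one]
    rw [conjTranspose_eq_transpose_of_trivial, transpose_sub, transpose_transpose, Matrix.sub_mul,
      Matrix.mul_sub, Matrix.mul_sub, hXE, hEX, hEE]
    abel
  rw [hsq]
  exact posSemidef_self_mul_conjTranspose _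

lemma diag_mul_transpose_le_det {X : Matrix κ ι ℝ} {s : κ → ι} (hX : X.submatrix id s = 1)
    (i : κ) : (X * Xᵀ) i i ≤ (X * Xᵀ).det := by
  have hP := posSemidef_mul_transpose_sub_one hX
  have htrace : (X * Xᵀ - 1 : Matrix κ κ ℝ) i i ≤ (X * Xᵀ - 1).trace :=
    Finset.single_le_sum (f := (X * Xᵀ - 1).diag) (fun _ _ => hP.diag_nonneg) (Finset.mem_univ i)
  have hdet := one_add_trace_le_det_one_add hP
  rw [add_sub_cancel] at hdet
  rw [Matrix.sub_apply, one_apply_eq] at htrace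
  linarith

lemma one_le_det_mul_transpose {X : Matrix κ ι ℝ} {s : κ → ι} (hX : X.submatrix id s = 1) :
    1 ≤ (X * Xᵀ).det := by
  have hP := posSemidef_mul_transpose_sub_one hX
  have hdet := one_add_trace_le_det_one_add hP
  rw [add_sub_cancel] at hdet
  linarith [hP.trace_nonneg]

lemma one_le_det_gram {B : Matrix κ ι ℤ} {s : κ → ι} (hs : (B.submatrix id s).det ≠ 0) :
    1 ≤ (B * Bᵀ).det := by
  obtain ⟨X, hX, hdet, -⟩ := exists_reduced_form hs
  have hD : (1 : ℝ) ≤ ((B.submatrix id s).det : ℝ) ^ 2 := by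
    exact_mod_cast Int.one_le_abs (pow_ne_zero 2 hs) |>.trans_eq (abs_of_nonneg (sq_nonneg _))
  have hone : (1 : ℝ) ≤ ((B * Bᵀ).det : ℝ) :=
    hdet ▸ one_le_mul_of_one_le_of_one_le hD (one_le_det_mul_transpose hX)
  exact_mod_cast hone

lemma sum_adjugate_mul_sq_le_det_gram {B : Matrix κ ι ℤ} {s : κ → ι}
    (hs : (B.submatrix id s).det ≠ 0) (i : κ) :
    ∑ j, ((B.submatrix id s).adjugate * B) i j ^ 2 ≤ (B * Bᵀ).det := by
  obtain ⟨X, hX, hdet, hadj⟩ := exists_reduced_form hs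
  have hle : ((∑ j, ((B.submatrix id s).adjugate * B) i j ^ 2 : ℤ) : ℝ) ≤ ((B * Bᵀ).det : ℝ) :=
    calc ((∑ j, ((B.submatrix id s).adjugate * B) i j ^ 2 : ℤ) : ℝ)
        = ((B.submatrix id s).det : ℝ) ^ 2 * (X * Xᵀ) i i := by
          rw [mul_apply, Finset.mul_sum]
          simp only [Int.cast_sum, Int.cast_pow, hadj, transpose_apply]
          exact Finset.sum_congr rfl fun j _ => by ring
      _ ≤ ((B.submatrix id s).det : ℝ) ^ 2 * (X * Xᵀ).det :=
          mul_le_mul_of_nonneg_left (diag_mul_transpose_le_det hX i) (sq_nonneg _)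
      _ = ((B * Bᵀ).det : ℝ) := hdet.symm
  exact_mod_cast hle

end GramDeterminant

section IntegerPoints

variable {κ ι : Type*} [Fintype κ]

/-- The rows of `B` generate the group of integer points of `V`. When `B` has `finrank ℚ V` rows,
this says that they form a `ℤ`-basis of `V ∩ ℤ^ι`. -/
def GeneratesIntegerPoints (V : Submodule ℚ (ι → ℚ)) (B : Matrix κ ι ℤ) : Prop :=
  ∀ z : ι → ℤ, toRat z ∈ V ↔ ∃ c, z = c ᵥ* B

variable {V : Submodule ℚ (ι → ℚ)}

lemma toRat_vecMul (c : κ → ℤ) (B : Matrix κ ι ℤ) :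
    toRat (c ᵥ* B) = ∑ i, (c i : ℚ) • toRat (B i) := by
  funext j
  simp [vecMul, dotProduct, toRat_apply]

lemma GeneratesIntegerPoints.span_rows [Finite ι] {B : Matrix κ ι ℤ}
    (hB : GeneratesIntegerPoints V B) :
    Submodule.span ℚ (Set.range fun i => toRat (B i)) = V := by
  classical
  refine le_antisymm (Submodule.span_le.mpr ?_) fun x hx => ?_
  · rintro _ ⟨i, rfl⟩
    exact (hB (B i)).mpr ⟨Pi.single i 1, (single_one_vecMul i B).symm⟩
  · obtain ⟨d, z, hd, hz⟩ := exists_toRat_eq_smul x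
    obtain ⟨c, rfl⟩ := (hB z).mp (hz ▸ V.smul_mem _ hx)
    rw [← Submodule.smul_mem_iff _ (Int.cast_ne_zero.mpr hd : (d : ℚ) ≠ 0), ← hz, toRat_vecMul]
    exact Submodule.sum_mem _ fun i _ => Submodule.smul_mem _ _ (Submodule.subset_span ⟨i, rfl⟩)

lemma exists_generatesIntegerPoints [Finite ι] {L : ℕ} (hV : Module.finrank ℚ V = L) :
    ∃ B : Matrix (Fin L) ι ℤ, GeneratesIntegerPoints V B := by
  set Λ := (V.restrictScalars ℤ).comap toRat
  set b := Module.finBasis ℤ Λ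
  set B : Matrix (Fin (Module.finrank ℤ Λ)) ι ℤ := fun i => b i
  have vecMul_B (c : Fin (Module.finrank ℤ Λ) → ℤ) : c ᵥ* B = (∑ i, c i • b i : Λ) := by
    funext j
    simp [vecMul, dotProduct, B]
  have hB : GeneratesIntegerPoints V B := by
    refine fun z => ⟨fun hz => ⟨b.repr ⟨z, hz⟩, ?_⟩, ?_⟩
    · rw [vecMul_B, b.sum_repr]
    · rintro ⟨c, rfl⟩
      rw [vecMul_B]
      exact (∑ i, c i • b i : Λ).2
  have hindep : LinearIndependent ℚ fun i => toRat (B i) := by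
    rw [← LinearIndependent.iff_fractionRing ℤ ℚ]
    exact (b.linearIndependent.map' Λ.subtype Λ.ker_subtype).map' toRat
      (LinearMap.ker_eq_bot.mpr toRat_injective)
  have hcard : Module.finrank ℤ Λ = L := by
    rw [← hV, ← hB.span_rows, finrank_span_eq_card hindep, Fintype.card_fin]
  exact hcard ▸ ⟨B, hB⟩

lemma linearIndependent_of_span_eq {v : κ → ι → ℚ}
    (hspan : Submodule.span ℚ (Set.range v) = V) (hV : Module.finrank ℚ V = Fintype.card κ) :
    LinearIndependent ℚ v := by
  rw [linearIndependent_iff_card_eq_finrank_span, Set.finrank, hspan, hV]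

lemma GeneratesIntegerPoints.exists_det_submatrix_ne_zero [Finite ι] {L : ℕ}
    {B : Matrix (Fin L) ι ℤ} (hB : GeneratesIntegerPoints V B) (hV : Module.finrank ℚ V = L) :
    ∃ s : Fin L → ι, (B.submatrix id s).det ≠ 0 := by
  obtain ⟨s, hs⟩ := exists_det_submatrix_id_ne_zero (B := B.map (Int.castRingHom ℚ))
    (linearIndependent_of_span_eq hB.span_rows (hV.trans (Fintype.card_fin L).symm))
  refine ⟨s, fun h => hs ?_⟩
  exact ((Int.castRingHom ℚ).map_det (B.submatrix id s)).symm.trans (by rw [h, map_zero])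

lemma GeneratesIntegerPoints.det_gram_dvd [Fintype ι] [DecidableEq κ] {B B' : Matrix κ ι ℤ}
    (hB : GeneratesIntegerPoints V B) (hB' : GeneratesIntegerPoints V B') :
    (B * Bᵀ).det ∣ (B' * B'ᵀ).det := by
  have hrow (i : κ) : ∃ c, B' i = c ᵥ* B :=
    (hB _).mp ((hB' _).mpr ⟨Pi.single i 1, (single_one_vecMul i B').symm⟩)
  choose U hU using hrow
  have hUB : B' = Matrix.of U * B := by
    ext i j
    rw [hU]
    rfl
  rw [hUB, det_mul_mul_transpose]
  exact Dvd.intro_left _ rfl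

end IntegerPoints

section SmallParametrization

variable {κ ι : Type*} [Fintype ι]

lemma abs_transpose_mul_mul_apply_le {A : Matrix ι ι ℤ} {E : Matrix ι κ ℤ} {H K : ℕ}
    (hA : ∀ i j, |A i j| ≤ H) (hE : ∀ j, ∑ i, |E i j| ≤ K) (i j : κ) :
    |(Eᵀ * A * E) i j| ≤ H * K ^ 2 := by
  simp only [mul_apply, transpose_apply]
  calc |∑ l, (∑ k, E k i * A k l) * E l j|
      ≤ ∑ l, (∑ k, |E k i| * H) * |E l j| := by
        refine (Finset.abs_sum_le_sum_abs _ _).trans (Finset.sum_le_sum fun l _ => ?_)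
        rw [abs_mul]
        refine mul_le_mul_of_nonneg_right ?_ (abs_nonneg _)
        refine (Finset.abs_sum_le_sum_abs _ _).trans (Finset.sum_le_sum fun k _ => ?_)
        rw [abs_mul]
        exact mul_le_mul_of_nonneg_left (hA k l) (abs_nonneg _)
    _ = H * ((∑ k, |E k i|) * ∑ l, |E l j|) := by
        rw [← Finset.mul_sum, ← Finset.sum_mul]
        ring
    _ ≤ H * (K * K) := by
        gcongr
        exacts [hE i, hE j]
    _ = H * K ^ 2 := by ring

lemma isSymm_transpose_mul_mul {R : Type*} [CommRing R] {A : Matrix ι ι R} (hA : A.IsSymm)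
    (E : Matrix ι κ R) : (Eᵀ * A * E).IsSymm := by
  rw [IsSymm, transpose_mul, transpose_mul, transpose_transpose, hA.eq, Matrix.mul_assoc]

lemma GeneratesIntegerPoints.exists_small_parametrization {L : ℕ} {V : Submodule ℚ (ι → ℚ)}
    {B : Matrix (Fin L) ι ℤ} (hB : GeneratesIntegerPoints V B) (hV : Module.finrank ℚ V = L) :
    ∃ E : Matrix ι (Fin L) ℤ, LinearMap.range (E.map (Int.castRingHom ℚ)).mulVecLin = V ∧
      ∀ j, ∑ i, |E i j| ≤ (B * Bᵀ).det := by
  classical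
  obtain ⟨s, hs⟩ := hB.exists_det_submatrix_ne_zero hV
  set S := B.submatrix id s
  refine ⟨(S.adjugate * B)ᵀ, ?_, fun j => ?_⟩
  · have hsurj : LinearMap.range (S.adjugateᵀ.map (Int.castRingHom ℚ)).mulVecLin = ⊤ := by
      rw [LinearMap.range_eq_top, coe_mulVecLin, mulVec_surjective_iff_isUnit,
        isUnit_iff_isUnit_det, isUnit_iff_ne_zero, ← RingHom.mapMatrix_apply, ← RingHom.map_det,
        det_transpose, det_adjugate]
      exact Int.cast_ne_zero.mpr (pow_ne_zero _ hs)
    rw [transpose_mul, Matrix.map_mul, mulVecLin_mul, LinearMap.range_comp_of_range_eq_top _ hsurj,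
      range_mulVecLin]
    exact hB.span_rows
  · refine le_trans (Finset.sum_le_sum fun i _ => ?_) (sum_adjugate_mul_sq_le_det_gram hs j)
    rw [transpose_apply, ← sq_abs]
    exact Int.le_self_sq _

variable [DecidableEq ι]

lemma mulVec_mem_smallZeros [Fintype κ] [DecidableEq κ] {A : Matrix ι ι ℤ} {E : Matrix ι κ ℤ}
    {P : MvPolynomial ι ℚ} {K X : ℤ} (hE : ∀ i j, |E i j| ≤ K) {c : κ → ℤ}
    (hc : c ∈ smallZeros (Eᵀ * A * E)
      (MvPolynomial.bind₁ (E.map (Int.castRingHom ℚ)).toMvPolynomial P) X) :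
    E *ᵥ c ∈ smallZeros A P (Fintype.card κ * (K * X)) := by
  obtain ⟨hzero, hPc, hcX⟩ := hc
  refine ⟨(toBilin'_mulVec A E c c).trans hzero, ?_, abs_mulVec_le hE hcX⟩
  simpa only [eval_bind₁, toMvPolynomial_eval_eq_apply, toRat_mulVec] using hPc

lemma finrank_span_smallZeros_pullback_le [Fintype κ] [DecidableEq κ] {A : Matrix ι ι ℤ}
    {E : Matrix ι κ ℤ} (hinj : Function.Injective (E.map (Int.castRingHom ℚ)).mulVecLin)
    {K : ℤ} (hE : ∀ i j, |E i j| ≤ K) (P : MvPolynomial ι ℚ) (X : ℤ) :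
    Module.finrank ℚ (Submodule.span ℚ (toRat '' smallZeros (Eᵀ * A * E)
        (MvPolynomial.bind₁ (E.map (Int.castRingHom ℚ)).toMvPolynomial P) X)) ≤
      Module.finrank ℚ (Submodule.span ℚ
        (toRat '' smallZeros A P (Fintype.card κ * (K * X)) ∩
          LinearMap.range (E.map (Int.castRingHom ℚ)).mulVecLin)) := by
  refine (Submodule.equivMapOfInjective _ hinj _).finrank_eq.trans_le (Submodule.finrank_mono ?_)
  rw [Submodule.map_span]
  refine Submodule.span_mono ?_
  rintro _ ⟨_, ⟨c, hc, rfl⟩, rfl⟩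
  exact ⟨⟨E *ᵥ c, mulVec_mem_smallZeros hE hc, toRat_mulVec E c⟩, ⟨toRat c, rfl⟩⟩

theorem exists_finrank_le_finrank_span_smallZeros_inter (L M : ℕ) :
    ∃ C : ℕ, 1 ≤ C ∧ ∀ {N : ℕ} (A : Matrix (Fin N) (Fin N) ℤ) (H : ℕ)
      (E : Matrix (Fin N) (Fin L) ℤ) (K : ℕ) (P : MvPolynomial (Fin N) ℚ)
      (V W : Submodule ℚ (Fin N → ℚ)) (z : Fin N → ℚ),
      A.IsSymm → (∀ i j, |A i j| ≤ H) → 1 ≤ H →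
      LinearMap.range (E.map (Int.castRingHom ℚ)).mulVecLin = V → Module.finrank ℚ V = L →
      (∀ j, ∑ i, |E i j| ≤ K) → 1 ≤ K → P.totalDegree ≤ M →
      W ≤ V → (∀ w ∈ W, toBilin' (A.map (Int.castRingHom ℚ)) w w = 0) →
      z ∈ V → toBilin' (A.map (Int.castRingHom ℚ)) z z = 0 → MvPolynomial.eval z P ≠ 0 →
      Module.finrank ℚ W ≤ Module.finrank ℚ (Submodule.span ℚ
        (toRat '' smallZeros A P (C * H ^ (L + 2) * K ^ (2 * L + 5) : ℕ) ∩ V)) := by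
  obtain ⟨C, hC⟩ := exists_finrank_le_finrank_span_smallZeros (Fin L) M
  refine ⟨L * C + 1, Nat.le_add_left _ _, ?_⟩
  rintro N A H E K P V W z hA hH hH₀ rfl hV hE hK₀ hP hWV hW ⟨z, rfl⟩ hz hPz
  set E' := E.map (Int.castRingHom ℚ)
  have hgram (x : Fin L → ℚ) : toBilin' ((Eᵀ * A * E).map (Int.castRingHom ℚ)) x x =
      toBilin' (A.map (Int.castRingHom ℚ)) (E' *ᵥ x) (E' *ᵥ x) := by
    rw [toBilin'_mulVec, Matrix.map_mul, Matrix.map_mul, transpose_map]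
  have hEK (i : Fin N) (j : Fin L) : |E i j| ≤ K :=
    (Finset.single_le_sum (f := fun i => |E i j|) (fun _ _ => abs_nonneg _)
      (Finset.mem_univ i)).trans (hE j)
  have hinj : Function.Injective E'.mulVecLin :=
    LinearMap.ker_eq_bot.mp <| Submodule.finrank_eq_zero.mp <| by
      have hrank := E'.mulVecLin.finrank_range_add_finrank_ker
      rwa [hV, Module.finrank_fin_fun, Nat.add_eq_left] at hrank
  calc Module.finrank ℚ W
      ≤ Module.finrank ℚ (W.comap E'.mulVecLin) := by
        conv_lhs => rw [← Submodule.map_comap_eq_of_le hWV]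
        exact Submodule.finrank_map_le _ _
    _ ≤ _ := hC (Eᵀ * A * E) (H * K ^ 2) (MvPolynomial.bind₁ E'.toMvPolynomial P) z _
        (isSymm_transpose_mul_mul hA E)
        (fun i j => mod_cast abs_transpose_mul_mul_apply_le hH hE i j)
        (one_le_mul hH₀ (one_le_pow₀ hK₀))
        ((totalDegree_bind₁_le (toMvPolynomial_totalDegree_le _) _).trans (by rwa [one_mul]))
        ((hgram z).trans hz)
        (by rwa [eval_bind₁, funext fun i => toMvPolynomial_eval_eq_apply E' i z])
        (fun w hw => (hgram w).trans (hW _ hw))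
    _ ≤ _ := finrank_span_smallZeros_pullback_le hinj hEK P _
    _ ≤ _ := by
      refine Submodule.finrank_mono (Submodule.span_mono
        (Set.inter_subset_inter_left _ (Set.image_mono (smallZeros_mono ?_))))
      rw [Fintype.card_fin]
      calc (L * (K * (C * (H * K ^ 2 : ℕ) ^ (L + 2))) : ℤ)
          = (L * C * H ^ (L + 2) * K ^ (2 * L + 5) : ℕ) := by push_cast; ring
        _ ≤ ((L * C + 1) * H ^ (L + 2) * K ^ (2 * L + 5) : ℕ) := by
          gcongr
          exact Nat.le_add_right _ _

end SmallParametrization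

section Heights

lemma exists_primitive_smul {ι : Type*} [Fintype ι] {x : ι → ℚ} (hx : x ≠ 0) :
    ∃ (y : ι → ℤ) (c : ℚ), c ≠ 0 ∧ toRat y = c • x ∧ Finset.univ.gcd y = 1 := by
  obtain ⟨c, z, hc, hz⟩ := exists_toRat_eq_smul x
  have hc' : (c : ℚ) ≠ 0 := Int.cast_ne_zero.mpr hc
  have hz₀ : z ≠ 0 := by
    rintro rfl
    exact smul_ne_zero hc' hx (hz ▸ map_zero _)
  obtain ⟨i, hi⟩ := Function.ne_iff.mp hz₀
  obtain ⟨y, hy, hgcd⟩ := Finset.extract_gcd z (s := Finset.univ) ⟨i, Finset.mem_univ i⟩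
  set d := Finset.univ.gcd z
  have hd : (d : ℚ) ≠ 0 :=
    Int.cast_ne_zero.mpr fun h => hi (Finset.gcd_eq_zero_iff.mp h i (Finset.mem_univ i))
  have hzy : toRat z = (d : ℚ) • toRat y := funext fun j => by
    simp [toRat_apply, hy j (Finset.mem_univ j)]
  exact ⟨y, (d : ℚ)⁻¹ * c, mul_ne_zero (inv_ne_zero hd) hc',
    by rw [mul_smul, ← hz, hzy, inv_smul_smul₀ hd], hgcd⟩

lemma exists_toRat_eq_smul_abs_le_projHeight {ι : Type*} [Fintype ι] {x : ι → ℚ} (hx : x ≠ 0) :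
    ∃ (y : ι → ℤ) (c : ℚ), c ≠ 0 ∧ toRat y = c • x ∧ ∀ i, |y i| ≤ projHeight x := by
  obtain ⟨y, c, hc, hy, hgcd⟩ := exists_primitive_smul hx
  obtain ⟨y, ⟨c, hc, hy⟩, -, hsup⟩ := Nat.sInf_mem (s := {m | ∃ y : ι → ℤ,
      (∃ c : ℚ, c ≠ 0 ∧ ∀ i, (y i : ℚ) = c * x i) ∧
      Finset.univ.gcd y = 1 ∧ m = Finset.univ.sup fun i => (y i).natAbs})
    ⟨_, y, ⟨c, hc, congrFun hy⟩, hgcd, rfl⟩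
  refine ⟨y, c, hc, funext hy, fun i => ?_⟩
  rw [Int.abs_eq_natAbs, projHeight, hsup]
  exact_mod_cast Finset.le_sup (f := fun i => (y i).natAbs) (Finset.mem_univ i)

lemma one_le_projHeight {ι : Type*} [Fintype ι] {x : ι → ℚ} (hx : x ≠ 0) :
    1 ≤ projHeight x := by
  obtain ⟨y, c, hc, hy, hyH⟩ := exists_toRat_eq_smul_abs_le_projHeight hx
  by_contra! hlt
  have hy₀ : y = 0 := funext fun i => abs_nonpos_iff.mp ((hyH i).trans (by lia))
  exact smul_ne_zero hc hx (by rw [← hy, hy₀, map_zero])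

lemma inhomHeight_toRat_le {N X : ℕ} {x : Fin N → ℤ} (hX : 1 ≤ X) (hx : ∀ i, |x i| ≤ X) :
    inhomHeight (toRat x) ≤ X := by
  set y : Fin (N + 1) → ℤ := Fin.cons 1 x
  have hcast (i : Fin (N + 1)) : (y i : ℚ) = 1 * (Fin.cons 1 (toRat x) : Fin (N + 1) → ℚ) i := by
    cases i using Fin.cases <;> simp [y, toRat_apply]
  have hgcd : Finset.univ.gcd y = 1 := by
    rw [← Finset.normalize_gcd, normalize_eq_one]
    exact isUnit_of_dvd_one (Finset.gcd_dvd (f := y) (Finset.mem_univ 0))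
  have hyX (i : Fin (N + 1)) : (y i).natAbs ≤ X := by
    cases i using Fin.cases with
    | zero => exact hX
    | succ j => exact_mod_cast Int.abs_eq_natAbs (x j) ▸ hx j
  calc inhomHeight (toRat x) ≤ Finset.univ.sup fun i => (y i).natAbs :=
        Nat.sInf_le ⟨y, ⟨1, one_ne_zero, hcast⟩, hgcd, rfl⟩
    _ ≤ X := Finset.sup_le fun i _ => hyX i

variable {N L : ℕ} {V : Submodule ℚ (Fin N → ℚ)} {B : Matrix (Fin L) (Fin N) ℤ}

lemma generatesIntegerPoints_iff : GeneratesIntegerPoints V B ↔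
    ∀ z : Fin N → ℤ, (fun i => (z i : ℚ)) ∈ V ↔ ∃ c : Fin L → ℤ, ∀ j, z j = ∑ i, c i * B i j :=
  forall_congr' fun _ => iff_congr Iff.rfl (exists_congr fun _ => funext_iff)

lemma GeneratesIntegerPoints.one_le_det_gram (hB : GeneratesIntegerPoints V B)
    (hV : Module.finrank ℚ V = L) : 1 ≤ (B * Bᵀ).det := by
  obtain ⟨s, hs⟩ := hB.exists_det_submatrix_ne_zero hV
  exact _root_.one_le_det_gram hs

lemma GeneratesIntegerPoints.subHeight_eq (hB : GeneratesIntegerPoints V B)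
    (hV : Module.finrank ℚ V = L) : subHeight N L V = √((B * Bᵀ).det : ℝ) := by
  have hdet_nonneg {B : Matrix (Fin L) (Fin N) ℤ} (hB : GeneratesIntegerPoints V B) :
      0 ≤ (B * Bᵀ).det := zero_le_one.trans (hB.one_le_det_gram hV)
  have hset : {r : ℝ | ∃ B : Matrix (Fin L) (Fin N) ℤ,
      GeneratesIntegerPoints V B ∧ r = √((B * Bᵀ).det : ℝ)} = {√((B * Bᵀ).det : ℝ)} := by
    refine Set.eq_singleton_iff_unique_mem.mpr ⟨⟨B, hB, rfl⟩, ?_⟩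
    rintro _ ⟨B', hB', rfl⟩
    rw [Int.dvd_antisymm (hdet_nonneg hB') (hdet_nonneg hB) (hB'.det_gram_dvd hB)
      (hB.det_gram_dvd hB')]
  simp only [subHeight, ← generatesIntegerPoints_iff]
  rw [hset, csInf_singleton]

lemma exists_small_parametrization_subHeight (hV : Module.finrank ℚ V = L) :
    ∃ (E : Matrix (Fin N) (Fin L) ℤ) (K : ℕ), 1 ≤ K ∧ (K : ℝ) = subHeight N L V ^ 2 ∧
      LinearMap.range (E.map (Int.castRingHom ℚ)).mulVecLin = V ∧ ∀ j, ∑ i, |E i j| ≤ K := by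
  obtain ⟨B, hB⟩ := exists_generatesIntegerPoints hV
  obtain ⟨E, hEV, hE⟩ := hB.exists_small_parametrization hV
  have hdet := hB.one_le_det_gram hV
  lift (B * Bᵀ).det to ℕ using zero_le_one.trans hdet with K hK
  refine ⟨E, K, by exact_mod_cast hdet, ?_, hEV, hE⟩
  rw [hB.subHeight_eq hV, ← hK, Int.cast_natCast, Real.sq_sqrt K.cast_nonneg]

lemma one_le_subHeight (hV : Module.finrank ℚ V = L) : 1 ≤ subHeight N L V := by
  obtain ⟨B, hB⟩ := exists_generatesIntegerPoints hV
  rw [hB.subHeight_eq hV, Real.one_le_sqrt]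
  exact_mod_cast hB.one_le_det_gram hV

end Heights

section Selection

lemma exists_mvPolynomial_eval_eq_zero_of_mem {σ K J : Type*} [Field K] [Fintype J]
    {κ : J → Type*} [∀ i, Fintype (κ i)] (P : (i : J) → κ i → MvPolynomial σ K) {z : σ → K}
    (hz : ¬ ∃ i, ∀ j, MvPolynomial.eval z (P i j) = 0) :
    ∃ Q : MvPolynomial σ K,
      Q.totalDegree ≤ ∑ i, Finset.univ.sup (fun j => (P i j).totalDegree) ∧
      MvPolynomial.eval z Q ≠ 0 ∧
      ∀ x, (∃ i, ∀ j, MvPolynomial.eval x (P i j) = 0) → MvPolynomial.eval x Q = 0 := by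
  push Not at hz
  choose j hj using hz
  refine ⟨∏ i, P i (j i), ?_, ?_, fun x ⟨i, hi⟩ => ?_⟩
  · exact (MvPolynomial.totalDegree_finsetProd _ _).trans (Finset.sum_le_sum fun i _ =>
      Finset.le_sup (f := fun j => (P i j).totalDegree) (Finset.mem_univ (j i)))
  · rw [map_prod]
    exact Finset.prod_ne_zero_iff.mpr fun i _ => hj i
  · rw [map_prod]
    exact Finset.prod_eq_zero (Finset.mem_univ i) (hi (j i))

lemma exists_linearIndependent_mem_monotone {K E α : Type*} [DivisionRing K] [AddCommGroup E]
    [Module K E] [FiniteDimensional K E] [LinearOrder α] (h : E → α) {S : Set E} {m : ℕ}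
    (hm : m ≤ Module.finrank K (Submodule.span K S)) :
    ∃ x : Fin m → E, LinearIndependent K x ∧ (∀ n, x n ∈ S) ∧ Monotone (h ∘ x) := by
  obtain ⟨y, hyS, -, hy⟩ := Submodule.exists_fun_fin_finrank_span_eq K S
  set x := y ∘ Fin.castLE hm
  have hx : LinearIndependent K x := hy.comp _ (Fin.castLE_injective hm)
  exact ⟨x ∘ Tuple.sort (h ∘ x), hx.comp _ (Tuple.sort _).injective, fun n => hyS _,
    Tuple.monotone_sort (h ∘ x)⟩

end Selection

lemma toBilin'_smul_of_apply {N : ℕ} (c : ℚ) (f : Fin N → Fin N → ℚ) (x y : Fin N → ℚ) :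
    toBilin' (c • Matrix.of f) x y = c * ∑ i, ∑ j, f i j * x i * y j := by
  simp only [map_smul, LinearMap.smul_apply, toBilin'_apply, of_apply, smul_eq_mul]
  exact congrArg _ (Finset.sum_congr rfl fun i _ => Finset.sum_congr rfl fun j _ => by ring)

lemma uncurry_ne_zero {α β γ : Type*} [Zero γ] {f : α → β → γ} (hf : f ≠ 0) :
    (fun p : α × β => f p.1 p.2) ≠ 0 :=
  fun h => hf (funext₂ fun a b => congrFun h (a, b))

lemma exists_int_matrix_eq_smul {N : ℕ} {f : Fin N → Fin N → ℚ} (hf : ∀ i j, f i j = f j i)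
    (hf₀ : f ≠ 0) :
    ∃ (A : Matrix (Fin N) (Fin N) ℤ) (c : ℚ), c ≠ 0 ∧ A.IsSymm ∧
      A.map (Int.castRingHom ℚ) = c • Matrix.of f ∧
      ∀ i j, |A i j| ≤ projHeight fun p : Fin N × Fin N => f p.1 p.2 := by
  obtain ⟨y, c, hc, hy, hyH⟩ := exists_toRat_eq_smul_abs_le_projHeight (uncurry_ne_zero hf₀)
  have hyf (i j : Fin N) : (y (i, j) : ℚ) = c * f i j := congrFun hy (i, j)
  refine ⟨Matrix.of fun i j => y (i, j), c, hc, IsSymm.ext fun i j => ?_, ?_, fun i j => hyH _⟩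
  · have hcast : (y (j, i) : ℚ) = y (i, j) := by rw [hyf, hyf, hf]
    exact_mod_cast hcast
  · ext i j
    exact hyf i j

lemma mul_pow_mul_pow_le_mul_rpow_mul_pow {C a b : ℝ} (hC : 0 ≤ C) (ha : 1 ≤ a) (hb : 1 ≤ b)
    (L : ℕ) : C * a ^ (L + 2) * b ^ (4 * L + 10) ≤
      C * a ^ ((9 * (L : ℝ) + 11) / 2) * b ^ (9 * L + 12) := by
  have hexp : ((L + 2 : ℕ) : ℝ) ≤ (9 * (L : ℝ) + 11) / 2 := by
    push_cast
    linarith [(Nat.cast_nonneg L : (0 : ℝ) ≤ L)]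
  rw [← Real.rpow_natCast a]
  gcongr C * ?_ * ?_
  · exact Real.rpow_le_rpow_of_exponent_le ha hexp
  · exact pow_le_pow_right₀ hb (by lia)

theorem small_zeros_outside_varieties_general (L M : ℕ) :
    ∃ C : ℝ, 0 < C ∧
      ∀ (N J : ℕ) (k : Fin J → ℕ) (P : (i : Fin J) → Fin (k i) → MvPolynomial (Fin N) ℚ),
      (∑ i, Finset.univ.sup fun j => (P i j).totalDegree) ≤ M →
      ∀ f : Fin N → Fin N → ℚ, (∀ i j, f i j = f j i) → f ≠ 0 →
      ∀ V : Submodule ℚ (Fin N → ℚ), Module.finrank ℚ V = L →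
      ∀ (W : Submodule ℚ (Fin N → ℚ)) (m : ℕ), IsTotallyIsotropic N f V W →
      Module.finrank ℚ W = m →
      ∀ z ∈ V, ∑ i, ∑ j, f i j * z i * z j = 0 →
      (¬ ∃ i, ∀ j, MvPolynomial.eval z (P i j) = 0) →
      ∃ x : Fin m → (Fin N → ℚ),
        LinearIndependent ℚ x ∧ (∀ n, x n ∈ V) ∧
        (∀ n, ∑ i, ∑ j, f i j * x n i * x n j = 0) ∧
        (∀ n, ¬ ∃ i, ∀ j, MvPolynomial.eval (x n) (P i j) = 0) ∧
        Monotone (inhomHeight ∘ x) ∧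
        ∀ n, (inhomHeight (x n) : ℝ) ≤
          C * (projHeight fun p : Fin N × Fin N => f p.1 p.2 : ℝ) ^ (L + 2) *
            subHeight N L V ^ (4 * L + 10) := by
  obtain ⟨C, hC₀, hC⟩ := exists_finrank_le_finrank_span_smallZeros_inter L M
  refine ⟨C, by exact_mod_cast hC₀, ?_⟩
  rintro N J k P hM f hf hf₀ V hV W m ⟨hWV, hW⟩ rfl z hzV hz hPz
  obtain ⟨A, c, hc, hA, hAf, hAH⟩ := exists_int_matrix_eq_smul hf hf₀
  have hH₀ := one_le_projHeight (uncurry_ne_zero hf₀)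
  set H := projHeight fun p : Fin N × Fin N => f p.1 p.2
  obtain ⟨E, K, hK₀, hKV, hEV, hE⟩ := exists_small_parametrization_subHeight hV
  obtain ⟨Q, hQM, hQz, hQ⟩ := exists_mvPolynomial_eval_eq_zero_of_mem P hPz
  have hzero_iff (x : Fin N → ℚ) : toBilin' (A.map (Int.castRingHom ℚ)) x x = 0 ↔
      ∑ i, ∑ j, f i j * x i * x j = 0 := by
    rw [hAf, toBilin'_smul_of_apply, mul_eq_zero_iff_left hc]
  obtain ⟨x, hx, hxmem, hmono⟩ := exists_linearIndependent_mem_monotone inhomHeight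
    (hC A H E K Q V W z hA hAH hH₀ hEV hV hE hK₀ (hQM.trans hM) hWV
      (fun w hw => (hzero_iff w).mpr (hW w hw w hw)) hzV ((hzero_iff z).mpr hz) hQz)
  choose hsmall hxV using hxmem
  choose y hy hyx using hsmall
  refine ⟨x, hx, hxV, fun n => ?_, fun n hPx => ?_, hmono, fun n => ?_⟩
  · rw [← hzero_iff, ← hyx, toBilin'_toRat, (hy n).1, Int.cast_zero]
  · exact (hy n).2.1 (hyx n ▸ hQ _ hPx)
  · calc (inhomHeight (x n) : ℝ) ≤ (C * H ^ (L + 2) * K ^ (2 * L + 5) : ℕ) := by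
          rw [← hyx]
          exact_mod_cast inhomHeight_toRat_le
            (one_le_mul (one_le_mul hC₀ (one_le_pow₀ hH₀)) (one_le_pow₀ hK₀)) (hy n).2.2
      _ = C * H ^ (L + 2) * subHeight N L V ^ (4 * L + 10) := by
          push_cast [hKV]
          ring

/-- **Small-height zeros of a quadratic form outside of a union of varieties (CFH).** Given a
union `𝒵` of `J` affine varieties in `ℚ^N` of total complexity `M`, and an `L`-dimensional
quadratic space `(V,F)` over ℚ with Witt index `ω` and radical dimension `λ` whose isotropic set
`Z(V,F)` is not contained in `𝒵`, there exist `m = ω + λ` linearly independent points of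
`Z(V,F) \ 𝒵` of nondecreasing inhomogeneous heights, all bounded by
`C(L,M) · H(F)^((9L+11)/2) · H(V)^(9L+12)`. -/
theorem small_zeros_outside_varieties (L M : ℕ) :
    ∃ C : ℝ, 0 < C ∧
      ∀ (N J : ℕ), 2 ≤ N → 1 ≤ J →
      ∀ (k : Fin J → ℕ), (∀ i, 1 ≤ k i) →
      ∀ (P : (i : Fin J) → Fin (k i) → MvPolynomial (Fin N) ℚ),
      (∀ i j, 1 ≤ (P i j).totalDegree) →
      M = (∑ i, Finset.univ.sup fun j => (P i j).totalDegree) →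
      ∀ (f : Fin N → Fin N → ℚ), (∀ i j, f i j = f j i) → f ≠ 0 →
      ∀ V : Submodule ℚ (Fin N → ℚ), 1 ≤ L → L ≤ N → Module.finrank ℚ V = L →
      ∀ (ω lam : ℕ), Module.finrank ℚ (quadRadical N f V) = lam →
      (∃ W, IsTotallyIsotropic N f V W ∧ Module.finrank ℚ W = ω + lam) →
      (∀ W, IsTotallyIsotropic N f V W → Module.finrank ℚ W ≤ ω + lam) →
      (∃ z : Fin N → ℚ, z ∈ V ∧ z ≠ 0 ∧ (∑ i, ∑ j, f i j * z i * z j = 0) ∧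
        ¬ ∃ i, ∀ j, MvPolynomial.eval z (P i j) = 0) →
      ∃ x : Fin (ω + lam) → (Fin N → ℚ),
        LinearIndependent ℚ x ∧
        (∀ n, x n ∈ V) ∧ (∀ n, x n ≠ 0) ∧
        (∀ n, ∑ i, ∑ j, f i j * x n i * x n j = 0) ∧
        (∀ n, ¬ ∃ i, ∀ j, MvPolynomial.eval (x n) (P i j) = 0) ∧
        (∀ n n' : Fin (ω + lam), n ≤ n' → inhomHeight (x n) ≤ inhomHeight (x n')) ∧
        (∀ n, ((inhomHeight (x n) : ℕ) : ℝ) ≤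
          C * ((projHeight fun p : Fin N × Fin N => f p.1 p.2 : ℕ) : ℝ) ^
              ((9 * (L : ℝ) + 11) / 2) * subHeight N L V ^ (9 * L + 12)) := by
  obtain ⟨C, hC₀, hC⟩ := small_zeros_outside_varieties_general L M
  refine ⟨C, hC₀, ?_⟩
  rintro N J - - k - P - hM f hf hf₀ V - - hV ω lam - ⟨W, hW, hWm⟩ - ⟨z, hzV, -, hz, hPz⟩
  obtain ⟨x, hx, hxV, hxf, hxP, hmono, hxle⟩ :=
    hC N J k P hM.ge f hf hf₀ V hV W _ hW hWm z hzV hz hPz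
  refine ⟨x, hx, hxV, hx.ne_zero, hxf, hxP, fun n n' h => hmono h, fun n => (hxle n).trans ?_⟩
  exact mul_pow_mul_pow_le_mul_rpow_mul_pow hC₀.le
    (mod_cast one_le_projHeight (uncurry_ne_zero hf₀)) (one_le_subHeight hV) L
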